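/- arXiv:2605.02254 — 5 statements merged into one kernel-verified Lean document; each statement's English description precedes it below -/
import Mathlib

section
/- Let Cay(D_n, S) be a Cayley graph over the dihedral group D_n (n ≥ 2). Then it is impossible that both of the following hold: (a) there exist a positive integer τ₁ and distinct vertex labels u, v with (u,v) ∈ (G_0 × G_0) ∪ (G_1 × G_1) such that PST occurs between u and v at time τ₁; and (b) there exist a positive integer τ₂ and vertex labels x, y with (x,y) ∈ (G_0 × G_1) ∪ (G_1 × G_0) such that PST occurs between x and y at time τ₂. Consequently, if Cay(D_n, S) exhibits PST, then the set of all pairs of vertices between which PST occurs is a subset of (G_0 × G_0) ∪ (G_1 × G_1) or a subset of (G_0 × G_1) ∪ (G_1 × G_0). -/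
/-!
Let `P` be the discriminant matrix and `t k = T_k(P)` for `k ∈ ℤ`. Right translations are
automorphisms of the Cayley graph, so PST from `u` to `v` at time `τ` says that `t τ` is the
permutation matrix of left multiplication by `u v⁻¹`. This matrix is also symmetric, hence its own
inverse, and it is not the identity when `u ≠ v`.

Among all `t k` there is at most one involution other than `1`. In fact
`(T_{m+p} - T_m)² = (T_{2m+p} - 1)(T_p - 1)`, and a polynomial in the Hermitian matrix `P` vanishes
once its square does, so `p` is a period of `t` as soon as `t p = 1`. If `(t k)² = 1 ≠ t k`, then
`t (2k) = 2 (t k)² - 1 = 1`, so `k` is a half-period that is not a period; as the periods form a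
cyclic group, all such `k` are congruent modulo the periods.

Hence all PST between distinct vertices, at whatever times, comes from one group element, which
cannot be both a rotation and a reflection.
-/

open Polynomial Matrix

noncomputable section

namespace PaperPST

/-! ### Grover-walk PST data for Cayley graphs over a general finite group -/

/-- The adjacency matrix of the Cayley graph `Cay(Γ, S)`: `A u v = 1` iff `u * v⁻¹ ∈ S`. -/
def adjG (Γ : Type*) [Group Γ] [Fintype Γ] [DecidableEq Γ] (S : Finset Γ) : Matrix Γ Γ ℂ :=
  Matrix.of fun u v => if u * v⁻¹ ∈ S then 1 else 0

/-- The discriminant matrix `P = (1/|S|) A` of `Cay(Γ, S)`. -/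
def discG (Γ : Type*) [Group Γ] [Fintype Γ] [DecidableEq Γ] (S : Finset Γ) : Matrix Γ Γ ℂ :=
  (S.card : ℂ)⁻¹ • adjG Γ S

/-- `T_τ(P)`, the `τ`-th Chebyshev polynomial of the first kind evaluated at the
discriminant matrix of `Cay(Γ, S)`. -/
def chebG (Γ : Type*) [Group Γ] [Fintype Γ] [DecidableEq Γ] (S : Finset Γ) (τ : ℕ) :
    Matrix Γ Γ ℂ :=
  Polynomial.aeval (discG Γ S) (Polynomial.Chebyshev.T ℂ τ)

/-- Perfect state transfer between vertices `u` and `v` of `Cay(Γ, S)` at time `τ`: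
`T_τ(P) e_u = e_v`. -/
def PSTG (Γ : Type*) [Group Γ] [Fintype Γ] [DecidableEq Γ] (S : Finset Γ) (τ : ℕ)
    (u v : Γ) : Prop :=
  chebG Γ S τ *ᵥ Pi.single u 1 = Pi.single v 1

/-- Evaluation of the `τ`-th Chebyshev polynomial of the first kind at a complex number. -/
def Teval (τ : ℕ) (x : ℂ) : ℂ := (Polynomial.Chebyshev.T ℂ τ).eval x

/-! ### Specialization to the dihedral group `D_n` -/

/-- Test whether an element of the dihedral group is a rotation `a^k`. -/
def isRot {n : ℕ} : DihedralGroup n → Bool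
  | .r _ => true
  | .sr _ => false

/-- The adjacency matrix of the Cayley graph `Cay(D_n, S)`. -/
def adjC (n : ℕ) (S : Finset (DihedralGroup n)) :
    Matrix (DihedralGroup n) (DihedralGroup n) ℂ :=
  Matrix.of fun u v => if u * v⁻¹ ∈ S then 1 else 0

/-- The discriminant matrix `P = (1/|S|) A` of `Cay(D_n, S)`. -/
def disc (n : ℕ) (S : Finset (DihedralGroup n)) :
    Matrix (DihedralGroup n) (DihedralGroup n) ℂ :=
  (S.card : ℂ)⁻¹ • adjC n S

/-- `T_τ(P)`, the `τ`-th Chebyshev polynomial of the first kind evaluated at the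
discriminant matrix. -/
def chebP (n : ℕ) [NeZero n] (S : Finset (DihedralGroup n)) (τ : ℕ) :
    Matrix (DihedralGroup n) (DihedralGroup n) ℂ :=
  Polynomial.aeval (disc n S) (Polynomial.Chebyshev.T ℂ τ)

/-- Perfect state transfer between vertices `u` and `v` of `Cay(D_n, S)` at time `τ`:
`T_τ(P) e_u = e_v`. -/
def PST (n : ℕ) [NeZero n] (S : Finset (DihedralGroup n)) (τ : ℕ)
    (u v : DihedralGroup n) : Prop :=
  chebP n S τ *ᵥ Pi.single u 1 = Pi.single v 1

/-- `ω = e^{2πi/n}`. -/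
def omega (n : ℕ) : ℂ := Complex.exp (2 * Real.pi * Complex.I / n)

/-- `η_h(C) = Σ_{0 ≤ k ≤ n-1, a^k ∈ C} ω^{hk}`. -/
def eta (n : ℕ) (h : ℕ) (C : Finset (DihedralGroup n)) : ℂ :=
  ∑ k ∈ Finset.range n, if DihedralGroup.r (k : ZMod n) ∈ C then omega n ^ (h * k) else 0

/-- `S_1 = S ∩ ⟨a⟩`. -/
def S1 (n : ℕ) (S : Finset (DihedralGroup n)) : Finset (DihedralGroup n) :=
  S.filter fun x => isRot x

/-- `S_2 = bS ∩ ⟨a⟩`, i.e. `{a^k : b a^k ∈ S}`. -/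
def S2 (n : ℕ) (S : Finset (DihedralGroup n)) : Finset (DihedralGroup n) :=
  (S.image fun s => DihedralGroup.sr 0 * s).filter fun x => isRot x

/-- `S_2⁻¹ = {s⁻¹ : s ∈ S_2}`. -/
def S2inv (n : ℕ) (S : Finset (DihedralGroup n)) : Finset (DihedralGroup n) :=
  (S2 n S).image fun x => x⁻¹

/-- The number of `a^k ∈ C` with `0 ≤ k ≤ n-1` and `k % 2 = p`. -/
def dcnt (n : ℕ) (C : Finset (DihedralGroup n)) (p : ℕ) : ℕ :=
  ((Finset.range n).filter fun k => k % 2 = p ∧ DihedralGroup.r (k : ZMod n) ∈ C).card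

/-- Vertex labels `0, …, 2n-1`: label `u < n` is `a^u`, and label `n ≤ u < 2n` is `b a^{u-n}`. -/
def lab (n : ℕ) (u : ℕ) : DihedralGroup n :=
  if u < n then DihedralGroup.r (u : ZMod n) else DihedralGroup.sr ((u - n : ℕ) : ZMod n)

/-- `Cay(D_n, S)` is a normal Cayley graph if `S` is closed under conjugation. -/
def IsNormalCay (n : ℕ) (S : Finset (DihedralGroup n)) : Prop :=
  ∀ g : DihedralGroup n, ∀ s ∈ S, g * s * g⁻¹ ∈ S

/-- `Cay(D_n, S)` exhibits PST at the minimum time `τ`. -/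
def exhibitsMinPST (n : ℕ) [NeZero n] (S : Finset (DihedralGroup n)) (τ : ℕ) : Prop :=
  (∃ u v : DihedralGroup n, u ≠ v ∧ PST n S τ u v) ∧
  ∀ σ : ℕ, 1 ≤ σ → σ < τ → ∀ u v : DihedralGroup n, u ≠ v → ¬ PST n S σ u v

/-! ### Eigenvector candidates -/

/-- The all-ones vector. -/
def w1 (n : ℕ) : DihedralGroup n → ℂ := fun _ => 1

/-- The vector which is `1` on `G_0` and `-1` on `G_1`. -/
def w2 (n : ℕ) : DihedralGroup n → ℂ
  | .r _ => 1
  | .sr _ => -1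

/-- The vector with entry `(-1)^k` at `a^k` and `(-1)^k` at `b a^k`. -/
def w3 (n : ℕ) : DihedralGroup n → ℂ
  | .r k => (-1) ^ k.val
  | .sr k => (-1) ^ k.val

/-- The vector with entry `(-1)^k` at `a^k` and `(-1)^{k+1}` at `b a^k`. -/
def w4 (n : ℕ) : DihedralGroup n → ℂ
  | .r k => (-1) ^ k.val
  | .sr k => (-1) ^ (k.val + 1)

/-- The vector with entry `ω^{hk}` at `a^k` and `0` at `b a^k`. -/
def uv1 (n h : ℕ) : DihedralGroup n → ℂ
  | .r k => omega n ^ (h * k.val)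
  | .sr _ => 0

/-- The vector with entry `0` at `a^k` and `ω^{hk}` at `b a^k`. -/
def uv2 (n h : ℕ) : DihedralGroup n → ℂ
  | .r _ => 0
  | .sr k => omega n ^ (h * k.val)

/-- The vector with entry `0` at `a^k` and `ω^{-hk}` at `b a^k`. -/
def uv3 (n h : ℕ) : DihedralGroup n → ℂ
  | .r _ => 0
  | .sr k => (omega n)⁻¹ ^ (h * k.val)

/-- The vector with entry `ω^{-hk}` at `a^k` and `0` at `b a^k`. -/
def uv4 (n h : ℕ) : DihedralGroup n → ℂ
  | .r k => (omega n)⁻¹ ^ (h * k.val)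
  | .sr _ => 0

/-- The vector with entry `conj(ℓ)·ω^{hk}` at `a^k` and `ω^{hk}` at `b a^k`. -/
def vv1 (n h : ℕ) (ℓ : ℂ) : DihedralGroup n → ℂ
  | .r k => (starRingEnd ℂ) ℓ * omega n ^ (h * k.val)
  | .sr k => omega n ^ (h * k.val)

/-- The vector with entry `ω^{-hk}` at `a^k` and `conj(ℓ)·ω^{-hk}` at `b a^k`. -/
def vv2 (n h : ℕ) (ℓ : ℂ) : DihedralGroup n → ℂ
  | .r k => (omega n)⁻¹ ^ (h * k.val)
  | .sr k => (starRingEnd ℂ) ℓ * (omega n)⁻¹ ^ (h * k.val)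

/-- The vector with entry `-ω^{hk}` at `a^k` and `ℓ·ω^{hk}` at `b a^k`. -/
def vv3 (n h : ℕ) (ℓ : ℂ) : DihedralGroup n → ℂ
  | .r k => -(omega n ^ (h * k.val))
  | .sr k => ℓ * omega n ^ (h * k.val)

/-- The vector with entry `ℓ·ω^{-hk}` at `a^k` and `-ω^{-hk}` at `b a^k`. -/
def vv4 (n h : ℕ) (ℓ : ℂ) : DihedralGroup n → ℂ
  | .r k => ℓ * (omega n)⁻¹ ^ (h * k.val)
  | .sr k => -((omega n)⁻¹ ^ (h * k.val))

/-- The periods of `f`, the trivial period `0` included, as a subgroup of the domain; for the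
sequence `k ↦ T_k(x)` on `ℤ` this group is cyclic. -/
def periods {G β : Type*} [AddGroup G] (f : G → β) : AddSubgroup G where
  carrier := {c | Function.Periodic f c}
  zero_mem' := Function.periodic_with_period_zero f
  add_mem' hc hd := hc.add_period hd
  neg_mem' hc := hc.neg

theorem sub_mem_of_two_mul_mem (H : AddSubgroup ℤ) {a b : ℤ} (ha : a ∉ H) (hb : b ∉ H)
    (ha2 : 2 * a ∈ H) (hb2 : 2 * b ∈ H) : a - b ∈ H := by
  obtain ⟨d, rfl⟩ := Int.subgroup_cyclic H
  simp only [← AddSubgroup.zmultiples_eq_closure, Int.mem_zmultiples_iff] at ha hb ha2 hb2 ⊢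
  have odd_quotient {c k : ℤ} (hc : ¬ d ∣ c) (hk : 2 * c = d * k) : Odd k := by
    by_contra even
    obtain ⟨l, rfl⟩ := Int.not_odd_iff_even.mp even
    exact hc ⟨l, by linarith⟩
  obtain ⟨k, hk⟩ := ha2
  obtain ⟨l, hl⟩ := hb2
  obtain ⟨c, hc⟩ := (odd_quotient ha hk).sub_odd (odd_quotient hb hl)
  exact ⟨c, mul_left_cancel₀ two_ne_zero (by linear_combination hk - hl + d * hc)⟩

section Chebyshev

/-- The square of `cos (m + p)θ - cos mθ = -2 sin (m + p/2)θ sin (p/2)θ`, with the squared sines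
written through double angles. -/
theorem sq_T_add_sub_T (R : Type*) [CommRing R] (m p : ℤ) :
    (Chebyshev.T R (m + p) - Chebyshev.T R m) ^ 2 =
      (Chebyshev.T R (2 * m + p) - 1) * (Chebyshev.T R p - 1) := by
  have over_int : (Chebyshev.T ℤ (m + p) - Chebyshev.T ℤ m) ^ 2 =
      (Chebyshev.T ℤ (2 * m + p) - 1) * (Chebyshev.T ℤ p - 1) := by
    have h₁ := Chebyshev.T_mul_T ℤ (m + p) (m + p)
    have h₂ := Chebyshev.T_mul_T ℤ m m
    have h₃ := Chebyshev.T_mul_T ℤ (m + p) m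
    have h₄ := Chebyshev.T_mul_T ℤ (2 * m + p) p
    ring_nf at h₁ h₂ h₃ h₄ ⊢
    simp only [Chebyshev.T_zero] at h₁ h₂
    apply mul_left_cancel₀ (two_ne_zero (α := ℤ[X]))
    linear_combination h₁ + h₂ - 2 * h₃ - h₄
  simpa using congrArg (Polynomial.map (Int.castRingHom R)) over_int

theorem T_two_mul (R : Type*) [CommRing R] (k : ℤ) :
    Chebyshev.T R (2 * k) = 2 * Chebyshev.T R k ^ 2 - 1 := by
  rw [Chebyshev.T_mul, Chebyshev.T_two]
  simp

variable {R A : Type*} [CommRing R] [Ring A] [Algebra R A] {x : A}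

theorem periodic_aeval_T_iff (hx : (RingHom.ker (aeval x : R[X] →ₐ[R] A)).IsRadical) {p : ℤ} :
    Function.Periodic (fun k : ℤ => aeval x (Chebyshev.T R k)) p ↔
      aeval x (Chebyshev.T R p) = 1 := by
  refine ⟨fun h => by simpa using h 0, fun hp m => ?_⟩
  have sq_mem_ker : (Chebyshev.T R (m + p) - Chebyshev.T R m) ^ 2 ∈ RingHom.ker (aeval x) := by
    simp [RingHom.mem_ker, sq_T_add_sub_T, hp]
  have mem_ker := hx ⟨2, sq_mem_ker⟩
  rwa [RingHom.mem_ker, map_sub, sub_eq_zero] at mem_ker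

theorem aeval_T_eq_of_sq_eq_one (hx : (RingHom.ker (aeval x : R[X] →ₐ[R] A)).IsRadical) {a b : ℤ}
    (ha : aeval x (Chebyshev.T R a) ^ 2 = 1) (ha_ne : aeval x (Chebyshev.T R a) ≠ 1)
    (hb : aeval x (Chebyshev.T R b) ^ 2 = 1) (hb_ne : aeval x (Chebyshev.T R b) ≠ 1) :
    aeval x (Chebyshev.T R a) = aeval x (Chebyshev.T R b) := by
  let H := periods fun k : ℤ => aeval x (Chebyshev.T R k)
  have mem_iff {k : ℤ} : k ∈ H ↔ aeval x (Chebyshev.T R k) = 1 := periodic_aeval_T_iff hx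
  have two_mul_mem {k : ℤ} (hk : aeval x (Chebyshev.T R k) ^ 2 = 1) : 2 * k ∈ H := by
    rw [mem_iff, T_two_mul, map_sub, map_mul, map_pow, hk, map_ofNat, map_one]
    norm_num
  have sub_mem : a - b ∈ H := sub_mem_of_two_mul_mem H (mem_iff.not.mpr ha_ne)
    (mem_iff.not.mpr hb_ne) (two_mul_mem ha) (two_mul_mem hb)
  simpa using sub_mem b

end Chebyshev

section MatrixPolynomial

theorem isStarNormal_aeval {R A : Type*} [CommSemiring R] [Semiring A] [StarRing A] [Algebra R A]
    {x : A} (hx : IsStarNormal x) (q : R[X]) : IsStarNormal (aeval x q) := by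
  have commute_aeval {y : A} (hy : Commute y x) : Commute y (aeval x q) :=
    Algebra.commute_of_mem_adjoin_singleton_of_commute (aeval_mem_adjoin_singleton R x) hy
  have commute_star : Commute (star (aeval x q)) x := by
    simpa only [star_star] using (commute_aeval hx.star_comm_self).symm.star_star
  exact ⟨commute_aeval commute_star⟩

variable {V W R : Type*} [Fintype V] [DecidableEq V] [Fintype W] [DecidableEq W]

theorem transpose_aeval [CommSemiring R] (M : Matrix V V R) (q : R[X]) :
    (aeval M q)ᵀ = aeval Mᵀ q := by
  simp [aeval_eq_sum_range, transpose_sum, transpose_pow]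

theorem aeval_submatrix_equiv [CommSemiring R] (M : Matrix V V R) (e : W ≃ V) (q : R[X]) :
    aeval (M.submatrix e e) q = (aeval M q).submatrix e e :=
  aeval_algHom_apply (reindexAlgEquiv R R e.symm) M q

theorem isRadical_ker_aeval [CommRing R] [PartialOrder R] [StarRing R] [StarOrderedRing R]
    [NoZeroDivisors R] {M : Matrix V V R} (hM : IsStarNormal M) :
    (RingHom.ker (aeval M : R[X] →ₐ[R] Matrix V V R)).IsRadical := by
  refine (Ideal.isRadical_iff_pow_one_lt 2 one_lt_two).mpr fun q hq => ?_
  have normal : (aeval M q)ᴴ * aeval M q = aeval M q * (aeval M q)ᴴ :=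
    (isStarNormal_aeval hM q).star_comm_self
  rw [RingHom.mem_ker, map_pow, sq] at hq
  rw [RingHom.mem_ker, ← conjTranspose_mul_self_eq_zero, ← self_mul_conjTranspose_mul_eq_zero,
    ← normal, mul_assoc, hq, mul_zero]

end MatrixPolynomial

theorem permMatrix_injective (n R : Type*) [DecidableEq n] [Zero R] [One R] [NeZero (1 : R)] :
    Function.Injective fun σ : Equiv.Perm n => σ.permMatrix R :=
  fun σ τ h => Equiv.ext fun i => by
    simpa [PEquiv.toMatrix_apply, eq_comm] using congrFun₂ h i (σ i)

section CayleyGraph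

variable {Γ : Type*} [Group Γ] [Fintype Γ] [DecidableEq Γ] {S : Finset Γ}

theorem isSymm_discG (hS : ∀ s ∈ S, s⁻¹ ∈ S) : (discG Γ S).IsSymm := by
  refine IsSymm.ext fun i j => ?_
  have mem_comm : j * i⁻¹ ∈ S ↔ i * j⁻¹ ∈ S :=
    ⟨fun h => by simpa using hS _ h, fun h => by simpa using hS _ h⟩
  simp [discG, adjG, mem_comm]

theorem isHermitian_discG (hS : ∀ s ∈ S, s⁻¹ ∈ S) : (discG Γ S).IsHermitian := by
  ext i j
  rw [conjTranspose_apply, (isSymm_discG hS).apply]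
  by_cases h : i * j⁻¹ ∈ S <;> simp [discG, adjG, h]

theorem chebG_mul_right (S : Finset Γ) (τ : ℕ) (x y g : Γ) :
    chebG Γ S τ (x * g) (y * g) = chebG Γ S τ x y := by
  have disc_invariant :
      (discG Γ S).submatrix (Equiv.mulRight g) (Equiv.mulRight g) = discG Γ S := by
    ext i j
    simp [discG, adjG]
  have cheb_invariant := aeval_submatrix_equiv (discG Γ S) (Equiv.mulRight g) (Chebyshev.T ℂ τ)
  rw [disc_invariant] at cheb_invariant
  exact (congrFun₂ cheb_invariant x y).symm

variable {σ τ : ℕ} {u v x y : Γ}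

theorem PSTG.chebG_eq_permMatrix (h : PSTG Γ S τ u v) :
    chebG Γ S τ = (Equiv.mulLeft (u * v⁻¹)).permMatrix ℂ := by
  ext i j
  have column_u (w : Γ) : chebG Γ S τ w u = if w = v then 1 else 0 := by
    rw [← Pi.single_apply, ← h, mulVec_single_one, col_apply]
  rw [← chebG_mul_right S τ i j (j⁻¹ * u), mul_inv_cancel_left, column_u]
  have eq_iff : i * (j⁻¹ * u) = v ↔ u * v⁻¹ * i = j := by
    constructor <;> rintro rfl <;> group
  simp only [eq_iff, PEquiv.toMatrix_apply, Equiv.toPEquiv_apply, Option.mem_some_iff,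
    Equiv.coe_mulLeft, eq_comm]

theorem PSTG.chebG_sq_eq_one (hS : ∀ s ∈ S, s⁻¹ ∈ S) (h : PSTG Γ S τ u v) :
    chebG Γ S τ ^ 2 = 1 := by
  have symm : (chebG Γ S τ)ᵀ = chebG Γ S τ := by
    rw [chebG, transpose_aeval, (isSymm_discG hS).eq]
  rw [sq]
  nth_rw 1 [← symm]
  rw [h.chebG_eq_permMatrix, transpose_permMatrix, ← permMatrix_mul, mul_inv_cancel,
    permMatrix_one]

theorem PSTG.chebG_ne_one (h : PSTG Γ S τ u v) (huv : u ≠ v) : chebG Γ S τ ≠ 1 := by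
  rw [h.chebG_eq_permMatrix, ← permMatrix_one, (permMatrix_injective Γ ℂ).ne_iff]
  intro mulLeft_eq_one
  apply huv
  simpa [mul_inv_eq_one] using Equiv.congr_fun mulLeft_eq_one 1

open scoped ComplexOrder in
theorem PSTG.mul_inv_eq_mul_inv (hS : ∀ s ∈ S, s⁻¹ ∈ S) (h : PSTG Γ S σ u v) (huv : u ≠ v)
    (h' : PSTG Γ S τ x y) (hxy : x ≠ y) : u * v⁻¹ = x * y⁻¹ := by
  have normal : IsStarNormal (discG Γ S) := (isHermitian_discG hS).isSelfAdjoint.isStarNormal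
  have radical := isRadical_ker_aeval normal
  have cheb_eq : chebG Γ S σ = chebG Γ S τ :=
    aeval_T_eq_of_sq_eq_one radical (h.chebG_sq_eq_one hS) (h.chebG_ne_one huv)
      (h'.chebG_sq_eq_one hS) (h'.chebG_ne_one hxy)
  rw [h.chebG_eq_permMatrix, h'.chebG_eq_permMatrix] at cheb_eq
  simpa using Equiv.congr_fun (permMatrix_injective Γ ℂ cheb_eq) 1

end CayleyGraph

section Dihedral

variable {n : ℕ}

theorem isRot_mul_inv (x y : DihedralGroup n) : isRot (x * y⁻¹) = (isRot x == isRot y) := by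
  cases x <;> cases y <;> rfl

theorem isRot_lab (n u : ℕ) : isRot (lab n u) = decide (u < n) := by
  unfold lab
  split_ifs with h <;> simp [isRot, h]

theorem lab_injOn (n : ℕ) : Set.InjOn (lab n) (Set.Iio (2 * n)) := by
  intro u hu v hv h
  have cast_inj := CharP.natCast_injOn_Iio (ZMod n) n
  simp only [Set.mem_Iio] at hu hv
  unfold lab at h
  split_ifs at h with hun hvn hvn
  · exact cast_inj hun hvn (DihedralGroup.r.inj h)
  · have sub_eq := cast_inj (Set.mem_Iio.mpr (by omega)) (Set.mem_Iio.mpr (by omega))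
      (DihedralGroup.sr.inj h)
    omega

variable [NeZero n] {S : Finset (DihedralGroup n)} {σ τ u v x y : ℕ}

theorem PST.lt_iff_lt_iff (hS : ∀ s ∈ S, s⁻¹ ∈ S)
    (h : PST n S σ (lab n u) (lab n v)) (hu : u < 2 * n) (hv : v < 2 * n) (huv : u ≠ v)
    (h' : PST n S τ (lab n x) (lab n y)) (hx : x < 2 * n) (hy : y < 2 * n) (hxy : x ≠ y) :
    (u < n ↔ v < n) ↔ (x < n ↔ y < n) := by
  -- `PST n S` unfolds to `PSTG (DihedralGroup n) S`.
  have same_element : lab n u * (lab n v)⁻¹ = lab n x * (lab n y)⁻¹ :=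
    PSTG.mul_inv_eq_mul_inv hS h ((lab_injOn n).ne hu hv huv) h' ((lab_injOn n).ne hx hy hxy)
  have same_type := congrArg isRot same_element
  rw [isRot_mul_inv, isRot_mul_inv, Bool.eq_iff_iff] at same_type
  simpa only [isRot_lab, beq_iff_eq, decide_eq_decide] using same_type

end Dihedral

theorem stmt_14 (n : ℕ) [NeZero n] (hn : 2 ≤ n)
    (S : Finset (DihedralGroup n)) (hS1 : (1 : DihedralGroup n) ∉ S)
    (hSinv : ∀ s ∈ S, s⁻¹ ∈ S) (hSne : S.Nonempty) :
    ¬ ((∃ τ₁ : ℕ, 1 ≤ τ₁ ∧ ∃ u v : ℕ, u < 2 * n ∧ v < 2 * n ∧ u ≠ v ∧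
          ((u < n ∧ v < n) ∨ (n ≤ u ∧ n ≤ v)) ∧ PST n S τ₁ (lab n u) (lab n v)) ∧
       (∃ τ₂ : ℕ, 1 ≤ τ₂ ∧ ∃ x y : ℕ, x < 2 * n ∧ y < 2 * n ∧
          ((x < n ∧ n ≤ y) ∨ (y < n ∧ n ≤ x)) ∧ PST n S τ₂ (lab n x) (lab n y))) ∧
    ((∃ τ : ℕ, 1 ≤ τ ∧ ∃ u v : ℕ, u < 2 * n ∧ v < 2 * n ∧ u ≠ v ∧
        PST n S τ (lab n u) (lab n v)) →
      ((∀ τ u v : ℕ, 1 ≤ τ → u < 2 * n → v < 2 * n → u ≠ v →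
          PST n S τ (lab n u) (lab n v) → ((u < n ∧ v < n) ∨ (n ≤ u ∧ n ≤ v))) ∨
       (∀ τ u v : ℕ, 1 ≤ τ → u < 2 * n → v < 2 * n → u ≠ v →
          PST n S τ (lab n u) (lab n v) → ((u < n ∧ n ≤ v) ∨ (v < n ∧ n ≤ u))))) := by
  refine ⟨?_, ?_⟩
  · rintro ⟨⟨τ₁, -, u, v, hu, hv, huv, same, h₁⟩, τ₂, -, x, y, hx, hy, opposite, h₂⟩
    have same_iff_same := h₁.lt_iff_lt_iff hSinv hu hv huv h₂ hx hy (by omega)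
    omega
  · rintro ⟨τ₁, -, u, v, hu, hv, huv, h₁⟩
    by_cases same : u < n ↔ v < n
    · left
      intro τ₂ x y _ hx hy hxy h₂
      have same_iff_same := h₁.lt_iff_lt_iff hSinv hu hv huv h₂ hx hy hxy
      omega
    · right
      intro τ₂ x y _ hx hy hxy h₂
      have same_iff_same := h₁.lt_iff_lt_iff hSinv hu hv huv h₂ hx hy hxy
      omega

end PaperPST
end
end

section
/- Let n = 2m with m ≥ 3 and let S = {ba, ba^{m−1}, ba^{m+1}, ba^{n−1}} ⊆ D_n. Then: (i) if m is odd, Cay(D_n, S) exhibits PST at the minimum time 2m; (ii) if m ≡ 0 (mod 4), Cay(D_n, S) exhibits no PST, i.e., for every positive integer τ and all distinct vertices u, v, T_τ(P) e_u ≠ e_v; (iii) if m ≡ 2 (mod 4), Cay(D_n, S) exhibits PST at the minimum time m. -/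
open Polynomial Matrix

noncomputable section

namespace PaperPST

/-!
The exponents `±1, m ± 1` of the four reflections in `S` come in two pairs of opposite elements,
and `b a^c u`, `b a^{-c} u` are, in some order, `b u a^c` and `b u a^{-c}`. So with
`y e_u = e_{b u a}`, which is invertible with `y⁻¹ e_u = e_{b u a⁻¹}`, and the idempotent
`E e_u = (e_u + e_{u a^m}) / 2`, which commutes with `y`, the discriminant factors as
`P = E (y + y⁻¹) / 2`. For an idempotent `E` this gives
`T_τ(P) = E (y^τ + y^{-τ}) / 2 + T_τ(0) (1 - E)`.

In `T_τ(P) e_u = e_v` with `u ≠ v`, multiplication by `1 - E` forces `v = u a^m` and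
`T_τ(0) = -1`, that is `τ ≡ 2 (mod 4)`, and then multiplication by `E` forces `a^τ ∈ {1, a^m}`,
that is `m ∣ τ`. Conversely, these conditions make `E y^{±τ} = E`, so `T_τ(P) = 2 E - 1` is right
translation by `a^m`.
-/

section Polynomials

variable {R A : Type*} [CommRing R] [Ring A] [Algebra R A]

lemma aeval_idempotent_mul {e q : A} (he : IsIdempotentElem e) (hq : Commute e q) (p : R[X]) :
    aeval (e * q) p = e * aeval q p + p.eval 0 • (1 - e) := by
  induction p using Polynomial.induction_on' with
  | add p₁ p₂ h₁ h₂ =>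
    rw [map_add, map_add, eval_add, h₁, h₂, mul_add, add_smul]
    abel
  | monomial k c =>
    cases k with
    | zero => simp [Algebra.algebraMap_eq_smul_one, smul_sub]
    | succ k => simp [aeval_monomial, hq.mul_pow, he.pow_succ_eq, Algebra.left_comm]

lemma two_mul_aeval_T {x y z : A} (hxy : x * y = 1) (hyx : y * x = 1) (hz : 2 * z = x + y)
    (k : ℕ) : 2 * aeval z (Chebyshev.T R k) = x ^ k + y ^ k := by
  induction k using Nat.twoStepInduction with
  | zero => simp [one_add_one_eq_two]
  | one => simpa using hz
  | more k ih₀ ih₁ =>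
    push_cast at ih₁ ⊢
    have hrec : 2 * aeval z (Chebyshev.T R (k + 2)) =
        2 * z * (2 * aeval z (Chebyshev.T R (k + 1))) - 2 * aeval z (Chebyshev.T R k) := by
      rw [Chebyshev.T_add_two, map_sub, map_mul, map_mul, aeval_X, map_ofNat, mul_sub]
      noncomm_ring
    have hxy' : x * y ^ (k + 1) = y ^ k := by rw [pow_succ', ← mul_assoc, hxy, one_mul]
    have hyx' : y * x ^ (k + 1) = x ^ k := by rw [pow_succ', ← mul_assoc, hyx, one_mul]
    rw [hrec, ih₀, ih₁, hz, add_mul, mul_add, mul_add, hxy', hyx', ← pow_succ', ← pow_succ']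
    abel

lemma T_eval_zero_eq_neg_one_iff [CharZero R] (k : ℕ) :
    (Chebyshev.T R k).eval 0 = -1 ↔ k % 4 = 2 := by
  rw [Chebyshev.T_eval_zero]
  split_ifs with hk
  · have hcast : (((k / 2 : ℤ).negOnePow : ℤ) : R) = -1 ↔ (k / 2 : ℤ).negOnePow = -1 := by
      rw [← Units.val_inj, ← Int.cast_inj (α := R), Units.val_neg, Units.val_one, Int.cast_neg,
        Int.cast_one]
    rw [hcast, Int.negOnePow_eq_neg_one_iff, Int.odd_iff]
    grind
  · have hne : k % 4 ≠ 2 := by grind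
    simp [hne]

end Polynomials

section Group

open MulOpposite

lemma pow_eq_one_of_even {M : Type*} [Monoid M] {b : M} (hb : b * b = 1) {k : ℕ} (hk : Even k) :
    b ^ k = 1 := by
  obtain ⟨j, rfl⟩ := hk
  rw [← two_mul, pow_mul, sq, hb, one_pow]

variable {G : Type*} [Group G] [Fintype G] [DecidableEq G]

/-- The biregular representation of `G` by permutation matrices: `(g, h)` sends the basis vector at
`u` to the basis vector at `g * u * h`. The second factor is `Gᵐᵒᵖ` because `h` acts from the right
without an inverse. -/
def biregular : G × Gᵐᵒᵖ →* Matrix G G ℂ where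
  toFun p := Matrix.of fun v u => if v = p.1 * u * p.2.unop then 1 else 0
  map_one' := by
    ext v u
    simp [Matrix.one_apply]
  map_mul' p q := by
    ext v u
    simp [Matrix.mul_apply, mul_assoc]

lemma biregular_mulVec_single (p : G × Gᵐᵒᵖ) (u : G) :
    biregular p *ᵥ Pi.single u 1 = Pi.single (p.1 * u * p.2.unop) 1 := by
  ext v
  simp [biregular, Pi.single_apply]

/-- The average of the identity and right translation by `z`; for `z * z = 1` it is the projection
onto the functions invariant under that translation. -/
def rightAverage (z : G) : Matrix G G ℂ := (2 : ℂ)⁻¹ • (1 + biregular (1, op z))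

/-- The walk operator that multiplies by `b` on the left and by `a` or `a⁻¹`, with equal weights, on
the right. -/
def twoSidedStep (b a : G) : Matrix G G ℂ :=
  (2 : ℂ)⁻¹ • (biregular (b, op a) + biregular (b, op a⁻¹))

lemma rightAverage_mulVec_single (z u : G) :
    rightAverage z *ᵥ Pi.single u 1 = (2 : ℂ)⁻¹ • (Pi.single u 1 + Pi.single (u * z) 1) := by
  rw [rightAverage, Matrix.smul_mulVec, Matrix.add_mulVec, Matrix.one_mulVec,
    biregular_mulVec_single, one_mul, unop_op]

lemma one_sub_rightAverage_mulVec_single (z u : G) :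
    (1 - rightAverage z) *ᵥ Pi.single u 1 =
      (2 : ℂ)⁻¹ • (Pi.single u 1 - Pi.single (u * z) 1) := by
  rw [Matrix.sub_mulVec, Matrix.one_mulVec, rightAverage_mulVec_single]
  module

lemma twoSidedStep_mulVec_single (b a u : G) :
    twoSidedStep b a *ᵥ Pi.single u 1 =
      (2 : ℂ)⁻¹ • (Pi.single (b * u * a) 1 + Pi.single (b * u * a⁻¹) 1) := by
  rw [twoSidedStep, Matrix.smul_mulVec, Matrix.add_mulVec, biregular_mulVec_single,
    biregular_mulVec_single, unop_op, unop_op]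

/-- Perfect state transfer from `u` to `v` at time `τ` for a walk with discriminant `P`; `PST` is
the case of the discriminant of a Cayley graph of the dihedral group. -/
def Transfers (P : Matrix G G ℂ) (τ : ℕ) (u v : G) : Prop :=
  aeval P (Chebyshev.T ℂ τ) *ᵥ Pi.single u 1 = Pi.single v 1

variable {a b z u v : G} {τ : ℕ}

lemma rightAverage_mul_biregular (hz : z * z = 1) :
    rightAverage z * biregular (1, op z) = rightAverage z := by
  have hsq : (biregular (1, op z) * biregular (1, op z) : Matrix G G ℂ) = 1 := by
    rw [← map_mul, Prod.mk_mul_mk, ← op_mul, hz, one_mul, op_one, ← Prod.one_eq_mk, map_one]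
  rw [rightAverage, smul_mul_assoc, add_mul, hsq, one_mul, add_comm]

lemma isIdempotentElem_rightAverage (hz : z * z = 1) : IsIdempotentElem (rightAverage z) := by
  rw [IsIdempotentElem]
  nth_rw 2 [rightAverage]
  rw [mul_smul_comm, mul_add, mul_one, rightAverage_mul_biregular hz]
  module

lemma commute_rightAverage_twoSidedStep (haz : Commute a z) (b : G) :
    Commute (rightAverage z) (twoSidedStep b a) := by
  have hcomm {c : G} (hc : Commute c z) :
      Commute (biregular (1, op z) : Matrix G G ℂ) (biregular (b, op c)) :=
    ((Commute.one_left b).prod hc.symm.op).map biregular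
  refine Commute.smul_left (.smul_right (.add_left (.one_left _) (.add_right ?_ ?_)) _) _
  exacts [hcomm haz, hcomm haz.inv_left]

lemma aeval_T_twoSidedStep (hb : b * b = 1) (a : G) (k : ℕ) :
    aeval (twoSidedStep b a) (Chebyshev.T ℂ k) = twoSidedStep (b ^ k) (a ^ k) := by
  have hinv {c d : G} (hcd : d * c = 1) :
      (biregular (b, op c) * biregular (b, op d) : Matrix G G ℂ) = 1 := by
    rw [← map_mul, Prod.mk_mul_mk, hb, ← op_mul, hcd, op_one, ← Prod.one_eq_mk, map_one]
  have htwo (x : Matrix G G ℂ) : 2 * x = (2 : ℂ) • x := by rw [two_mul, two_smul]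
  have h := two_mul_aeval_T (R := ℂ) (hinv (inv_mul_cancel a)) (hinv (mul_inv_cancel a))
    (z := twoSidedStep b a) (by rw [htwo, twoSidedStep, smul_inv_smul₀ two_ne_zero]) k
  rw [htwo, ← eq_inv_smul_iff₀ two_ne_zero] at h
  rw [h, twoSidedStep, ← map_pow, ← map_pow, Prod.pow_mk, Prod.pow_mk, ← op_pow, ← op_pow, inv_pow]

lemma aeval_T_rightAverage_mul_twoSidedStep (hb : b * b = 1) (hz : z * z = 1) (haz : Commute a z)
    (k : ℕ) :
    aeval (rightAverage z * twoSidedStep b a) (Chebyshev.T ℂ k) =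
      rightAverage z * twoSidedStep (b ^ k) (a ^ k) +
        (Chebyshev.T ℂ k).eval 0 • (1 - rightAverage z) := by
  rw [aeval_idempotent_mul (isIdempotentElem_rightAverage hz)
    (commute_rightAverage_twoSidedStep haz b), aeval_T_twoSidedStep hb]

lemma Transfers.eq_mul_and_eval_zero_eq (hb : b * b = 1) (hz : z * z = 1) (hz₁ : z ≠ 1)
    (haz : Commute a z) (huv : u ≠ v)
    (h : Transfers (rightAverage z * twoSidedStep b a) τ u v) :
    v = u * z ∧ (Chebyshev.T ℂ τ).eval 0 = -1 := by
  have hidem := isIdempotentElem_rightAverage hz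
  have hcompl : (Chebyshev.T ℂ τ).eval 0 • ((1 - rightAverage z) *ᵥ Pi.single u 1) =
      (1 - rightAverage z) *ᵥ Pi.single v 1 := by
    rw [← h, aeval_T_rightAverage_mul_twoSidedStep hb hz haz, Matrix.mulVec_mulVec, mul_add,
      ← mul_assoc, hidem.one_sub_mul_self, zero_mul, zero_add, mul_smul_comm, hidem.one_sub.eq,
      Matrix.smul_mulVec]
  rw [one_sub_rightAverage_mulVec_single, one_sub_rightAverage_mulVec_single] at hcompl
  have hv := congrFun hcompl v
  simp only [Pi.smul_apply, Pi.sub_apply, Pi.single_apply, smul_eq_mul, huv.symm, left_eq_mul, hz₁,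
    if_true, if_false] at hv
  split_ifs at hv with huz
  · exact ⟨huz, by linear_combination -2 * hv⟩
  · norm_num at hv

lemma Transfers.pow_eq_one_or_pow_eq (hb : b * b = 1) (hz : z * z = 1) (haz : Commute a z)
    (hτ : Even τ)
    (h : Transfers (rightAverage z * twoSidedStep b a) τ u (u * z)) :
    a ^ τ = 1 ∨ a ^ τ = z := by
  have hidem := isIdempotentElem_rightAverage hz
  have hproj : rightAverage z *ᵥ twoSidedStep 1 (a ^ τ) *ᵥ Pi.single u 1 =
      rightAverage z *ᵥ Pi.single u 1 := calc
    _ = rightAverage z *ᵥ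
          aeval (rightAverage z * twoSidedStep b a) (Chebyshev.T ℂ τ) *ᵥ Pi.single u 1 := by
      rw [aeval_T_rightAverage_mul_twoSidedStep hb hz haz, pow_eq_one_of_even hb hτ,
        Matrix.mulVec_mulVec, Matrix.mulVec_mulVec, mul_add, ← mul_assoc, hidem.eq, mul_smul_comm,
        hidem.mul_one_sub_self, smul_zero, add_zero]
    _ = rightAverage z *ᵥ biregular (1, op z) *ᵥ Pi.single u 1 := by
      rw [h, biregular_mulVec_single, one_mul, unop_op]
    _ = rightAverage z *ᵥ Pi.single u 1 := by
      rw [Matrix.mulVec_mulVec, rightAverage_mul_biregular hz]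
  by_contra! ⟨hone, hpow⟩
  have hinv : z⁻¹ = z := inv_eq_of_mul_eq_one_left hz
  have hmul : a ^ τ * z ≠ 1 := by rwa [Ne, mul_eq_one_iff_eq_inv, hinv]
  have hinv_mul : (a ^ τ)⁻¹ * z ≠ 1 := by rwa [Ne, inv_mul_eq_one]
  have hu := congrFun hproj u
  simp only [twoSidedStep_mulVec_single, Matrix.mulVec_smul, Matrix.mulVec_add,
    rightAverage_mulVec_single, Pi.smul_apply, Pi.add_apply, Pi.single_apply, smul_eq_mul, one_mul,
    mul_assoc, left_eq_mul, inv_eq_one, hone, hmul, hinv_mul, if_true, if_false] at hu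
  split_ifs at hu <;> norm_num at hu

lemma aeval_T_eq_biregular_of_mod_four (hb : b * b = 1) (hz : z * z = 1) (haz : Commute a z)
    (hτ : τ % 4 = 2) (ha : a ^ τ = 1 ∨ a ^ τ = z) :
    aeval (rightAverage z * twoSidedStep b a) (Chebyshev.T ℂ τ) = biregular (1, op z) := by
  have hstep : rightAverage z * twoSidedStep 1 (a ^ τ) = rightAverage z := by
    have hsq : (a ^ τ)⁻¹ = a ^ τ := by
      rcases ha with ha | ha <;> rw [ha]
      exacts [inv_one, inv_eq_of_mul_eq_one_left hz]
    have habsorb : rightAverage z * biregular (1, op (a ^ τ)) = rightAverage z := by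
      rcases ha with ha | ha <;> rw [ha]
      · rw [op_one, ← Prod.one_eq_mk, map_one, mul_one]
      · exact rightAverage_mul_biregular hz
    rw [twoSidedStep, hsq, mul_smul_comm, mul_add, habsorb]
    module
  rw [aeval_T_rightAverage_mul_twoSidedStep hb hz haz, (T_eval_zero_eq_neg_one_iff τ).2 hτ,
    pow_eq_one_of_even hb (Nat.even_iff.2 (by omega)), hstep, rightAverage]
  module

theorem transfers_iff (hb : b * b = 1) (hz : z * z = 1) (hz₁ : z ≠ 1) (haz : Commute a z)
    (huv : u ≠ v) :
    Transfers (rightAverage z * twoSidedStep b a) τ u v ↔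
      v = u * z ∧ τ % 4 = 2 ∧ (a ^ τ = 1 ∨ a ^ τ = z) := by
  constructor
  · intro h
    obtain ⟨rfl, hT⟩ := h.eq_mul_and_eval_zero_eq hb hz hz₁ haz huv
    have hτ := (T_eval_zero_eq_neg_one_iff τ).1 hT
    exact ⟨rfl, hτ, h.pow_eq_one_or_pow_eq hb hz haz (Nat.even_iff.2 (by lia))⟩
  · rintro ⟨rfl, hτ, ha⟩
    rw [Transfers, aeval_T_eq_biregular_of_mod_four hb hz haz hτ ha, biregular_mulVec_single,
      one_mul, unop_op]

end Group

section Dihedral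

open DihedralGroup MulOpposite

lemma adjC_eq_sum {n : ℕ} [NeZero n] (S : Finset (DihedralGroup n)) :
    adjC n S = ∑ s ∈ S, biregular (s, 1) := by
  ext v u
  simp [adjC, biregular, Matrix.sum_apply, ← mul_inv_eq_iff_eq_mul]

lemma biregular_sr_add_biregular_sr_neg {n : ℕ} [NeZero n] (c : ZMod n) :
    biregular (sr c, 1) + biregular (sr (-c), 1) =
      biregular (sr 0, op (r c)) + biregular (sr 0, op (r c)⁻¹) := by
  refine Matrix.ext_of_mulVec_single fun u => ?_
  simp only [Matrix.add_mulVec, biregular_mulVec_single, unop_op, unop_one, mul_one, inv_r]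
  rcases u with i | i
  · simp only [sr_mul_r, zero_add, add_comm i]
  · simp only [sr_mul_sr, r_mul_r, sub_zero, sub_neg_eq_add, ← sub_eq_add_neg]
    rw [add_comm]

/-- The connection set `{b a, b a^{m-1}, b a^{m+1}, b a^{n-1}}` of the theorem, for `n = 2m`. -/
def connectionSet (m : ℕ) : Finset (DihedralGroup (2 * m)) :=
  {sr (1 : ℕ), sr (m - 1 : ℕ), sr (m + 1 : ℕ), sr (2 * m - 1 : ℕ)}

variable {m : ℕ}

lemma natCast_add_self (m : ℕ) : (m : ZMod (2 * m)) + m = 0 := by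
  rw [← two_mul]
  exact_mod_cast ZMod.natCast_self (2 * m)

lemma sum_connectionSet {M : Type*} [AddCommMonoid M] (hm : 3 ≤ m)
    (f : DihedralGroup (2 * m) → M) :
    ∑ s ∈ connectionSet m, f s =
      (f (sr 1) + f (sr (-1))) + (f (sr (m + 1)) + f (sr (-(m + 1)))) := by
  have hne {i j : ℕ} (hi : i < 2 * m) (hj : j < 2 * m) (hij : i ≠ j) :
      (i : ZMod (2 * m)) ≠ j := by
    rwa [Ne, ZMod.natCast_eq_natCast_iff', Nat.mod_eq_of_lt hi, Nat.mod_eq_of_lt hj]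
  have hneg_one : ((2 * m - 1 : ℕ) : ZMod (2 * m)) = -1 := by
    rw [Nat.cast_sub (by lia), ZMod.natCast_self, Nat.cast_one, zero_sub]
  have hneg : ((m - 1 : ℕ) : ZMod (2 * m)) = -(m + 1) := by
    rw [Nat.cast_sub (by lia), Nat.cast_one]
    linear_combination natCast_add_self m
  rw [connectionSet, Finset.sum_insert, Finset.sum_insert, Finset.sum_pair, hneg_one, hneg]
  · push_cast
    abel
  all_goals
    simp only [Finset.mem_insert, Finset.mem_singleton, sr.injEq, not_or, Ne]
    split_ands <;> exact hne (by lia) (by lia) (by lia)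

lemma disc_connectionSet [NeZero (2 * m)] (hm : 3 ≤ m) :
    disc (2 * m) (connectionSet m) = rightAverage (r m) * twoSidedStep (sr 0) (r 1) := by
  have hcard : (connectionSet m).card = 4 := by
    rw [Finset.card_eq_sum_ones, sum_connectionSet hm]
    norm_num
  have hr (c : ZMod (2 * m)) :
      (biregular (1, op (r (m : ZMod (2 * m)))) * biregular (sr 0, op (r c)) : Matrix _ _ ℂ) =
        biregular (sr 0, op (r ((m : ZMod (2 * m)) + c))) := by
    rw [← map_mul, Prod.mk_mul_mk, one_mul, ← op_mul, r_mul_r, add_comm]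
  have hneg : -((m : ZMod (2 * m)) + 1) = m + -1 := by
    linear_combination -natCast_add_self m
  rw [disc, hcard, adjC_eq_sum, sum_connectionSet hm, biregular_sr_add_biregular_sr_neg,
    biregular_sr_add_biregular_sr_neg, rightAverage, twoSidedStep, smul_mul_smul_comm, add_mul,
    one_mul, mul_add, inv_r, inv_r, hr, hr, hneg]
  norm_num

lemma r_one_pow_eq_one_or_eq_iff (m τ : ℕ) :
    (r 1 ^ τ = (1 : DihedralGroup (2 * m)) ∨ r 1 ^ τ = (r m : DihedralGroup (2 * m))) ↔ m ∣ τ := by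
  rw [r_one_pow, one_def, r.injEq, r.injEq]
  constructor
  · rintro (h | h)
    · exact (Dvd.intro_left 2 rfl).trans ((ZMod.natCast_eq_zero_iff τ (2 * m)).1 h)
    · have hmod : τ ≡ m [MOD m] := ((ZMod.natCast_eq_natCast_iff τ m (2 * m)).1 h).of_mul_left 2
      exact hmod.dvd_iff dvd_rfl |>.2 dvd_rfl
  · rintro ⟨q, rfl⟩
    push_cast
    obtain ⟨t, rfl | rfl⟩ := Nat.even_or_odd' q
    · left
      push_cast
      linear_combination (t : ZMod (2 * m)) * natCast_add_self m
    · right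
      push_cast
      linear_combination (t : ZMod (2 * m)) * natCast_add_self m

lemma r_half_ne_one (hm : 0 < m) : (r m : DihedralGroup (2 * m)) ≠ 1 := by
  rw [one_def, Ne, r.injEq, ZMod.natCast_eq_zero_iff]
  exact Nat.not_dvd_of_pos_of_lt hm (by lia)

theorem PST_connectionSet_iff [NeZero (2 * m)] (hm : 3 ≤ m) {τ : ℕ} {u v : DihedralGroup (2 * m)}
    (huv : u ≠ v) :
    PST (2 * m) (connectionSet m) τ u v ↔ v = u * r m ∧ τ % 4 = 2 ∧ m ∣ τ := by
  have hinvol : (r m * r m : DihedralGroup (2 * m)) = 1 := by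
    rw [r_mul_r, natCast_add_self, r_zero]
  have hcomm : Commute (r 1 : DihedralGroup (2 * m)) (r m) := by
    rw [Commute, SemiconjBy, r_mul_r, r_mul_r, add_comm]
  change Transfers (disc (2 * m) (connectionSet m)) τ u v ↔ _
  rw [disc_connectionSet hm,
    transfers_iff (sr_mul_self 0) hinvol (r_half_ne_one (by lia)) hcomm huv,
    r_one_pow_eq_one_or_eq_iff]

theorem exists_PST_connectionSet_iff [NeZero (2 * m)] (hm : 3 ≤ m) (τ : ℕ) :
    (∃ u v, u ≠ v ∧ PST (2 * m) (connectionSet m) τ u v) ↔ τ % 4 = 2 ∧ m ∣ τ := by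
  constructor
  · rintro ⟨u, v, huv, h⟩
    exact ((PST_connectionSet_iff hm huv).1 h).2
  · intro hτ
    have hne : (1 : DihedralGroup (2 * m)) ≠ 1 * r m := by
      simpa using (r_half_ne_one (by lia)).symm
    exact ⟨1, 1 * r m, hne, (PST_connectionSet_iff hm hne).2 ⟨rfl, hτ⟩⟩

theorem exhibitsMinPST_connectionSet_iff [NeZero (2 * m)] (hm : 3 ≤ m) (τ : ℕ) :
    exhibitsMinPST (2 * m) (connectionSet m) τ ↔
      (τ % 4 = 2 ∧ m ∣ τ) ∧ ∀ σ, 1 ≤ σ → σ < τ → ¬ (σ % 4 = 2 ∧ m ∣ σ) := by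
  simp only [exhibitsMinPST, ← exists_PST_connectionSet_iff hm, not_exists, not_and]

end Dihedral

theorem stmt_15 (n m : ℕ) [NeZero n] (hm : 3 ≤ m) (hnm : n = 2 * m)
    (S : Finset (DihedralGroup n))
    (hS : S = {DihedralGroup.sr ((1 : ℕ) : ZMod n), DihedralGroup.sr ((m - 1 : ℕ) : ZMod n),
               DihedralGroup.sr ((m + 1 : ℕ) : ZMod n), DihedralGroup.sr ((n - 1 : ℕ) : ZMod n)}) :
    (Odd m → exhibitsMinPST n S (2 * m)) ∧
    (m % 4 = 0 → ∀ τ : ℕ, 1 ≤ τ → ∀ u v : DihedralGroup n, u ≠ v → ¬ PST n S τ u v) ∧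
    (m % 4 = 2 → exhibitsMinPST n S m) := by
  subst hnm
  obtain rfl : S = connectionSet m := hS
  rw [exhibitsMinPST_connectionSet_iff hm, exhibitsMinPST_connectionSet_iff hm]
  refine ⟨fun hodd => ⟨⟨?_, Dvd.intro_left 2 rfl⟩, ?_⟩, fun hm₄ τ _ u v huv h => ?_,
    fun hm₄ => ⟨⟨hm₄, dvd_rfl⟩, ?_⟩⟩
  · obtain ⟨t, rfl⟩ := hodd
    lia
  · rintro σ hσ hlt ⟨hσ₄, hdvd⟩
    have htwo : 2 * m ∣ σ := hodd.coprime_two_left.mul_dvd_of_dvd_of_dvd (by lia) hdvd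
    exact Nat.not_dvd_of_pos_of_lt hσ hlt htwo
  · obtain ⟨-, hτ₄, hdvd⟩ := (PST_connectionSet_iff hm huv).1 h
    have hfour : 4 ∣ τ := (Nat.dvd_of_mod_eq_zero hm₄).trans hdvd
    lia
  · rintro σ hσ hlt ⟨-, hdvd⟩
    exact Nat.not_dvd_of_pos_of_lt hσ hlt hdvd

end PaperPST
end
end

section
/- Let n = 2m with m ≥ 3 and let S = {a, a^{m−1}, a^{m+1}, a^{n−1}} ⊆ D_n. Then: (i) if m is odd, Cay(D_n, S) exhibits PST at the minimum time 2m; (ii) if m ≡ 0 (mod 4), Cay(D_n, S) exhibits no PST, i.e., for every positive integer τ and all distinct vertices u, v, T_τ(P) e_u ≠ e_v; (iii) if m ≡ 2 (mod 4), Cay(D_n, S) exhibits PST at the minimum time m. -/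
open Polynomial Matrix

noncomputable section

namespace PaperPST

/-!
For a symmetric set of rotations `a ^ j`, `j ∈ J`, the characters `ψ` of `ZMod n`, supported on one
of the two cosets of `⟨a⟩`, form a spanning family of left eigenvectors of `P`, with eigenvalue
`λ ψ = 𝔼 j ∈ J, ψ j`. Pairing `T_τ(P) e_u = e_v` with them shows that PST from `u` at time `τ` can
only reach vertices `u a ^ d`, and does so exactly when `T_τ(λ ψ) = ψ d` for every `ψ`.

For `J = {±1, m ± 1}` one has `λ ψ = (ψ 1 + ψ (-1)) / 2 * (1 + ψ m) / 2` with `ψ m = ±1`, so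
`T_τ(λ ψ)` is `(ψ τ + ψ (-τ)) / 2` or `T_τ(0)`. When `d ≠ 0`, the standard character forces
`T_τ(0) = -1` and `d = m`, that is `τ ≡ 2 (mod 4)`; its square then forces `ψ τ = 1`, that is
`m ∣ τ`. These two conditions on `τ` are also sufficient, and everything else is the arithmetic of
their least common solution.
-/

open scoped BigOperators

lemma eval_T_add_div_two {K : Type*} [Field K] [NeZero (2 : K)] {x y : K} (hxy : x * y = 1)
    (k : ℕ) : (Chebyshev.T K k).eval ((x + y) / 2) = (x ^ k + y ^ k) / 2 := by
  have : Invertible (2 : K) := invertibleOfNonzero two_ne_zero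
  rw [chebyshev_T_eq_dickson_one_one, ← dickson_one_one_eval_add_inv x y hxy]
  simp only [eval_mul, eval_C, eval_comp, eval_X, eval_ofNat, invOf_eq_inv, div_eq_inv_mul,
    mul_inv_cancel_left₀ (NeZero.ne (2 : K))]

/-! ### Polynomials of a matrix with spanning left eigenvectors -/

section LeftEigenvectors

variable {R ι κ : Type*} [CommRing R] [Fintype ι] [DecidableEq ι] {M : Matrix ι ι R}

lemma vecMul_aeval_of_vecMul_eq_smul {w : ι → R} {μ : R} (hw : w ᵥ* M = μ • w) (q : R[X]) :
    w ᵥ* aeval M q = q.eval μ • w := by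
  induction q using Polynomial.induction_on with
  | C a => simp [Algebra.algebraMap_eq_smul_one, vecMul_smul]
  | add p q hp hq => rw [map_add, vecMul_add, hp, hq, eval_add, add_smul]
  | monomial k a ih =>
    rw [pow_succ, ← mul_assoc, map_mul, aeval_X, ← vecMul_vecMul, ih, smul_vecMul, hw, smul_smul,
      eval_mul_X]

lemma aeval_mulVec_eq_iff {w : κ → ι → R} (hspan : Submodule.span R (Set.range w) = ⊤)
    {μ : κ → R} (hw : ∀ k, w k ᵥ* M = μ k • w k) (q : R[X]) (x y : ι → R) :
    aeval M q *ᵥ x = y ↔ ∀ k, q.eval (μ k) * (w k ⬝ᵥ x) = w k ⬝ᵥ y := by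
  have pairing k : w k ⬝ᵥ (aeval M q *ᵥ x) = q.eval (μ k) * (w k ⬝ᵥ x) := by
    rw [dotProduct_mulVec, vecMul_aeval_of_vecMul_eq_smul (hw k), smul_dotProduct, smul_eq_mul]
  simp only [← pairing]
  refine ⟨fun h k => by rw [h], fun h => (dotProductEquiv R ι).injective ?_⟩
  refine LinearMap.ext_on_range hspan fun k => ?_
  simpa only [dotProductEquiv_apply_apply, dotProduct_comm _ (w k)] using h k

end LeftEigenvectors

/-! ### Perfect state transfer for sets of rotations -/

section Rotations

variable {n : ℕ}

/-- The exponent `k` of the vertex `a ^ k` or `b a ^ k`. -/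
def rotIdx : DihedralGroup n → ZMod n
  | .r k => k
  | .sr k => k

/-- The character `ψ` of `ZMod n`, transported to the rotations (`b = true`) or to the reflections
(`b = false`) and extended by zero. These are the eigenvectors used to diagonalize Cayley graphs
whose connection set consists of rotations. -/
def cosetChar (b : Bool) (ψ : AddChar (ZMod n) ℂ) (g : DihedralGroup n) : ℂ :=
  if isRot g = b then ψ (rotIdx g) else 0

lemma eq_mul_r_of_isRot_eq {u v : DihedralGroup n} (h : isRot v = isRot u) :
    v = u * .r (rotIdx v - rotIdx u) := by
  rcases u with i | i <;> rcases v with j | j <;> simp_all [isRot, rotIdx]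

lemma cosetChar_mul_r (b : Bool) (ψ : AddChar (ZMod n) ℂ) (g : DihedralGroup n) (d : ZMod n) :
    cosetChar b ψ (g * .r d) = ψ d * cosetChar b ψ g := by
  rcases g with k | k <;> simp [cosetChar, isRot, rotIdx, AddChar.map_add_eq_mul, mul_comm]

lemma sum_cosetChar_r_mul {J : Finset (ZMod n)} (hneg : ∀ j ∈ J, -j ∈ J) (b : Bool)
    (ψ : AddChar (ZMod n) ℂ) (g : DihedralGroup n) :
    ∑ j ∈ J, cosetChar b ψ (.r j * g) = (∑ j ∈ J, ψ j) * cosetChar b ψ g := by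
  rw [Finset.sum_mul]
  rcases g with k | k
  · simp [cosetChar, isRot, rotIdx, AddChar.map_add_eq_mul]
  · refine Finset.sum_nbij' (-·) (-·) hneg hneg (by simp) (by simp) fun j _ => ?_
    simp [cosetChar, isRot, rotIdx, ← AddChar.map_add_eq_mul, sub_eq_neg_add]

variable [NeZero n]

lemma vecMul_adjC_apply (S : Finset (DihedralGroup n)) (w : DihedralGroup n → ℂ)
    (g : DihedralGroup n) : (w ᵥ* adjC n S) g = ∑ s ∈ S, w (s * g) := by
  calc (w ᵥ* adjC n S) g = ∑ s, w (s * g) * adjC n S (s * g) g :=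
        (Equiv.sum_comp (Equiv.mulRight g) fun u => w u * adjC n S u g).symm
    _ = ∑ s ∈ S, w (s * g) := by simp [adjC]

lemma cosetChar_vecMul_disc {J : Finset (ZMod n)} (hneg : ∀ j ∈ J, -j ∈ J) (b : Bool)
    (ψ : AddChar (ZMod n) ℂ) :
    cosetChar b ψ ᵥ* disc n (J.image .r) = (𝔼 j ∈ J, ψ j) • cosetChar b ψ := by
  have r_injective : Function.Injective (DihedralGroup.r : ZMod n → DihedralGroup n) :=
    fun _ _ => DihedralGroup.r.inj
  ext g
  rw [disc, vecMul_smul, Pi.smul_apply, vecMul_adjC_apply, Finset.sum_image r_injective.injOn,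
    sum_cosetChar_r_mul hneg, Finset.card_image_of_injective _ r_injective,
    Finset.expect_eq_sum_div_card, Pi.smul_apply, smul_eq_mul, smul_eq_mul]
  ring

lemma sum_smul_cosetChar (g : DihedralGroup n) :
    ∑ ψ : AddChar (ZMod n) ℂ, ψ (-rotIdx g) • cosetChar (isRot g) ψ = Pi.single g (n : ℂ) := by
  ext x
  by_cases hx : isRot x = isRot g
  · have h : x = g ↔ -rotIdx g + rotIdx x = 0 := by
      rcases g with i | i <;> rcases x with j | j <;>
        simp_all [isRot, rotIdx, neg_add_eq_zero, eq_comm]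
    simp [cosetChar, hx, ← AddChar.map_add_eq_mul, AddChar.sum_apply_eq_ite, Pi.single_apply, h,
      ZMod.card]
  · have h : x ≠ g := fun h => hx (h ▸ rfl)
    simp [cosetChar, hx, h]

lemma span_range_cosetChar :
    Submodule.span ℂ (Set.range fun p : Bool × AddChar (ZMod n) ℂ => cosetChar p.1 p.2) = ⊤ := by
  rw [eq_top_iff, ← (Pi.basisFun ℂ (DihedralGroup n)).span_eq, Submodule.span_le]
  rintro _ ⟨g, rfl⟩
  have hn : (n : ℂ) ≠ 0 := NeZero.ne _
  have single_eq : Pi.basisFun ℂ (DihedralGroup n) g =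
      (n : ℂ)⁻¹ • ∑ ψ : AddChar (ZMod n) ℂ, ψ (-rotIdx g) • cosetChar (isRot g) ψ := by
    rw [sum_smul_cosetChar, Pi.basisFun_apply, ← Pi.single_smul, smul_eq_mul, inv_mul_cancel₀ hn]
  rw [single_eq]
  exact Submodule.smul_mem _ _ <| Submodule.sum_mem _ fun ψ _ =>
    Submodule.smul_mem _ _ <| Submodule.subset_span ⟨(isRot g, ψ), rfl⟩

theorem PST_image_r_iff {J : Finset (ZMod n)} (hJ : J.Nonempty) (hneg : ∀ j ∈ J, -j ∈ J)
    {τ : ℕ} {u v : DihedralGroup n} :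
    PST n (J.image .r) τ u v ↔ ∃ d, v = u * .r d ∧
      ∀ ψ : AddChar (ZMod n) ℂ, (Chebyshev.T ℂ τ).eval (𝔼 j ∈ J, ψ j) = ψ d := by
  rw [PST, chebP, aeval_mulVec_eq_iff span_range_cosetChar fun p =>
    cosetChar_vecMul_disc hneg p.1 p.2]
  simp only [dotProduct_single_one]
  refine ⟨fun h => ?_, ?_⟩
  · have same_coset : isRot v = isRot u := by
      have := h (isRot u, 0)
      simpa [cosetChar, hJ] using this
    have hv := eq_mul_r_of_isRot_eq same_coset
    refine ⟨_, hv, fun ψ => ?_⟩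
    have hψ := h (isRot u, ψ)
    rw [hv, cosetChar_mul_r] at hψ
    refine mul_right_cancel₀ ?_ hψ
    simp [cosetChar, (ψ.val_isUnit _).ne_zero]
  · rintro ⟨d, rfl, h⟩ ⟨b, ψ⟩
    rw [h, cosetChar_mul_r]

end Rotations

/-! ### The connection set `{a, a ^ (m - 1), a ^ (m + 1), a ^ (n - 1)}` -/

section ConnExp

variable {n m : ℕ}

/-- The exponents `±1, m ± 1` of the connection set of the theorem. -/
def connExp (n m : ℕ) : Finset (ZMod n) := {1, (m : ZMod n) - 1, (m : ZMod n) + 1, -1}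

lemma natCast_add_self_eq_zero (hnm : n = 2 * m) : (m : ZMod n) + m = 0 := by
  rw [← two_mul, ← ZMod.natCast_self n, hnm]
  push_cast
  rfl

lemma connExp_nonempty : (connExp n m).Nonempty := Finset.insert_nonempty _ _

lemma neg_mem_connExp (hnm : n = 2 * m) : ∀ j ∈ connExp n m, -j ∈ connExp n m := by
  have := natCast_add_self_eq_zero hnm
  simp only [connExp, Finset.mem_insert, Finset.mem_singleton]
  grind

lemma expect_connExp (hm : 3 ≤ m) (hnm : n = 2 * m) (ψ : AddChar (ZMod n) ℂ) :
    𝔼 j ∈ connExp n m, ψ j = (ψ 1 + ψ (-1)) / 2 * ((1 + ψ m) / 2) := by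
  have natCast_ne_zero {k : ℕ} (hk : 0 < k) (hkn : k < n) : (k : ZMod n) ≠ 0 := by
    rw [Ne, ZMod.natCast_eq_zero_iff]
    exact Nat.not_dvd_of_pos_of_lt hk hkn
  have two_ne : ((2 : ℕ) : ZMod n) ≠ 0 := natCast_ne_zero two_pos (by lia)
  have m_ne : (m : ZMod n) ≠ 0 := natCast_ne_zero (by lia) (by lia)
  have m_sub_two_ne : ((m - 2 : ℕ) : ZMod n) ≠ 0 := natCast_ne_zero (by lia) (by lia)
  have m_add_m := natCast_add_self_eq_zero hnm
  rw [Nat.cast_sub (by lia)] at m_sub_two_ne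
  push_cast at two_ne m_sub_two_ne
  have one_notMem : (1 : ZMod n) ∉ ({(m : ZMod n) - 1, (m : ZMod n) + 1, -1} : Finset _) := by
    simp only [Finset.mem_insert, Finset.mem_singleton]; grind
  have sub_one_notMem : (m : ZMod n) - 1 ∉ ({(m : ZMod n) + 1, -1} : Finset (ZMod n)) := by
    simp only [Finset.mem_insert, Finset.mem_singleton]; grind
  have add_one_notMem : (m : ZMod n) + 1 ∉ ({-1} : Finset (ZMod n)) := by
    simp only [Finset.mem_singleton]; grind
  rw [Finset.expect_eq_sum_div_card, connExp, Finset.sum_insert one_notMem,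
    Finset.sum_insert sub_one_notMem, Finset.sum_insert add_one_notMem, Finset.sum_singleton,
    Finset.card_insert_of_notMem one_notMem, Finset.card_insert_of_notMem sub_one_notMem,
    Finset.card_insert_of_notMem add_one_notMem, Finset.card_singleton]
  simp only [sub_eq_add_neg, AddChar.map_add_eq_mul]
  push_cast
  ring

lemma map_half_eq_one_or_neg_one {R : Type*} [CommRing R] [NoZeroDivisors R] (hnm : n = 2 * m)
    (ψ : AddChar (ZMod n) R) : ψ m = 1 ∨ ψ m = -1 := by
  rw [← mul_self_eq_one_iff, ← AddChar.map_add_eq_mul, natCast_add_self_eq_zero hnm,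
    AddChar.map_zero_eq_one]

lemma eval_T_expect_connExp_of_map_half_eq_one (hm : 3 ≤ m) (hnm : n = 2 * m)
    {ψ : AddChar (ZMod n) ℂ} (hψ : ψ m = 1) (τ : ℕ) :
    (Chebyshev.T ℂ τ).eval (𝔼 j ∈ connExp n m, ψ j) = (ψ τ + ψ (-τ)) / 2 := by
  have hinv : ψ 1 * ψ (-1) = 1 := by simp [← AddChar.map_add_eq_mul]
  rw [expect_connExp hm hnm, hψ, one_add_one_eq_two, div_self two_ne_zero, mul_one,
    eval_T_add_div_two hinv, ← AddChar.map_nsmul_eq_pow, ← AddChar.map_nsmul_eq_pow]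
  simp

lemma eval_T_expect_connExp_of_map_half_eq_neg_one (hm : 3 ≤ m) (hnm : n = 2 * m)
    {ψ : AddChar (ZMod n) ℂ} (hψ : ψ m = -1) (τ : ℕ) :
    (Chebyshev.T ℂ τ).eval (𝔼 j ∈ connExp n m, ψ j) =
      if Even τ then (-1) ^ (τ / 2) else 0 := by
  rw [expect_connExp hm hnm, hψ, add_neg_cancel, zero_div, mul_zero, Chebyshev.T_eval_zero]
  norm_cast

lemma eval_T_expect_connExp_eq_map_half (hm : 3 ≤ m) (hnm : n = 2 * m) {τ : ℕ}
    (h4 : τ % 4 = 2) (hdvd : m ∣ τ) (ψ : AddChar (ZMod n) ℂ) :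
    (Chebyshev.T ℂ τ).eval (𝔼 j ∈ connExp n m, ψ j) = ψ m := by
  rcases map_half_eq_one_or_neg_one hnm ψ with hψ | hψ
  · obtain ⟨t, rfl⟩ := hdvd
    have map_multiple : ψ ((m * t : ℕ) : ZMod n) = 1 := by
      rw [mul_comm, Nat.cast_mul, ← nsmul_eq_mul, AddChar.map_nsmul_eq_pow, hψ, one_pow]
    rw [eval_T_expect_connExp_of_map_half_eq_one hm hnm hψ, AddChar.map_neg_eq_inv, map_multiple,
      hψ]
    norm_num
  · rw [eval_T_expect_connExp_of_map_half_eq_neg_one hm hnm hψ,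
      if_pos (Nat.even_iff.2 (by lia)), hψ, (Nat.odd_iff.2 (by lia)).neg_one_pow]

variable [NeZero n]

lemma image_r_connExp (hm : 1 ≤ m) :
    (connExp n m).image DihedralGroup.r =
      {.r ((1 : ℕ) : ZMod n), .r ((m - 1 : ℕ) : ZMod n), .r ((m + 1 : ℕ) : ZMod n),
        .r ((n - 1 : ℕ) : ZMod n)} := by
  simp [connExp, Finset.image_insert, Nat.cast_pred (NeZero.pos n), Nat.cast_sub hm]

lemma stdAddChar_half (hnm : n = 2 * m) : ZMod.stdAddChar (m : ZMod n) = -1 := by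
  refine (map_half_eq_one_or_neg_one hnm _).resolve_left fun h => ?_
  have m_eq_zero : (m : ZMod n) = 0 :=
    ZMod.injective_stdAddChar (h.trans (AddChar.map_zero_eq_one _).symm)
  have := NeZero.pos n
  have := Nat.le_of_dvd (by lia) ((ZMod.natCast_eq_zero_iff m n).1 m_eq_zero)
  lia

lemma mod_four_eq_two_and_eq_half_of_eval_T_stdAddChar (hm : 3 ≤ m) (hnm : n = 2 * m) {τ : ℕ}
    {d : ZMod n} (hd : d ≠ 0)
    (h : (Chebyshev.T ℂ τ).eval (𝔼 j ∈ connExp n m, ZMod.stdAddChar j) = ZMod.stdAddChar d) :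
    τ % 4 = 2 ∧ d = m := by
  have map_d_ne_one : ZMod.stdAddChar d ≠ 1 := fun h1 =>
    hd (ZMod.injective_stdAddChar (h1.trans (AddChar.map_zero_eq_one _).symm))
  rw [eval_T_expect_connExp_of_map_half_eq_neg_one hm hnm (stdAddChar_half hnm)] at h
  split_ifs at h with heven
  · rcases Nat.even_or_odd (τ / 2) with hhalf | hhalf
    · exact absurd (h.symm.trans hhalf.neg_one_pow) map_d_ne_one
    · rw [hhalf.neg_one_pow, ← stdAddChar_half hnm] at h
      exact ⟨by grind, (ZMod.injective_stdAddChar h).symm⟩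
  · exact absurd h.symm (ZMod.stdAddChar.val_isUnit d).ne_zero

lemma dvd_of_eval_T_stdAddChar_sq (hm : 3 ≤ m) (hnm : n = 2 * m) {τ : ℕ}
    (h : (Chebyshev.T ℂ τ).eval (𝔼 j ∈ connExp n m, (ZMod.stdAddChar ^ 2) j) = 1) : m ∣ τ := by
  set ψ : AddChar (ZMod n) ℂ := ZMod.stdAddChar ^ 2 with ψ_def
  have map_half : ψ m = 1 := by rw [ψ_def, AddChar.pow_apply, stdAddChar_half hnm, neg_one_sq]
  have map_τ : ψ τ = 1 := by
    have hinv : ψ τ * ψ (-τ) = 1 := by simp [← AddChar.map_add_eq_mul]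
    rw [eval_T_expect_connExp_of_map_half_eq_one hm hnm map_half] at h
    have : (ψ τ - 1) ^ 2 = 0 := by linear_combination 2 * ψ τ * h - hinv
    exact sub_eq_zero.1 (pow_eq_zero_iff two_ne_zero |>.1 this)
  have two_τ_eq_zero : ((2 * τ : ℕ) : ZMod n) = 0 := by
    refine ZMod.injective_stdAddChar ?_
    rw [AddChar.map_zero_eq_one, Nat.cast_mul, ← nsmul_eq_mul, AddChar.map_nsmul_eq_pow, ← map_τ,
      ψ_def, AddChar.pow_apply]
  rw [ZMod.natCast_eq_zero_iff, hnm] at two_τ_eq_zero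
  exact Nat.dvd_of_mul_dvd_mul_left two_pos two_τ_eq_zero

theorem PST_image_r_connExp_iff (hm : 3 ≤ m) (hnm : n = 2 * m) {τ : ℕ} {u v : DihedralGroup n}
    (huv : u ≠ v) :
    PST n ((connExp n m).image .r) τ u v ↔
      τ % 4 = 2 ∧ m ∣ τ ∧ v = u * .r (m : ZMod n) := by
  rw [PST_image_r_iff connExp_nonempty (neg_mem_connExp hnm)]
  constructor
  · rintro ⟨d, rfl, h⟩
    have hd : d ≠ 0 := by rintro rfl; simp at huv
    obtain ⟨h4, rfl⟩ := mod_four_eq_two_and_eq_half_of_eval_T_stdAddChar hm hnm hd (h _)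
    refine ⟨h4, dvd_of_eval_T_stdAddChar_sq hm hnm ?_, rfl⟩
    rw [h, AddChar.pow_apply, stdAddChar_half hnm, neg_one_sq]
  · rintro ⟨h4, hdvd, hv⟩
    exact ⟨m, hv, eval_T_expect_connExp_eq_map_half hm hnm h4 hdvd⟩

lemma exhibitsMinPST_image_r_connExp (hm : 3 ≤ m) (hnm : n = 2 * m) {τ : ℕ}
    (hτ : IsLeast {σ | σ % 4 = 2 ∧ m ∣ σ} τ) :
    exhibitsMinPST n ((connExp n m).image .r) τ := by
  have one_ne : (1 : DihedralGroup n) ≠ 1 * .r (m : ZMod n) := by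
    rw [one_mul, DihedralGroup.one_def, Ne, DihedralGroup.r.injEq, eq_comm,
      ZMod.natCast_eq_zero_iff]
    exact Nat.not_dvd_of_pos_of_lt (by lia) (by lia)
  refine ⟨⟨1, _, one_ne, (PST_image_r_connExp_iff hm hnm one_ne).2 ⟨hτ.1.1, hτ.1.2, rfl⟩⟩,
    fun σ _ hσ u v huv h => ?_⟩
  obtain ⟨h4, hdvd, -⟩ := (PST_image_r_connExp_iff hm hnm huv).1 h
  exact hσ.not_ge (hτ.2 ⟨h4, hdvd⟩)

end ConnExp

lemma isLeast_two_mul_of_odd {m : ℕ} (hm : Odd m) : IsLeast {σ | σ % 4 = 2 ∧ m ∣ σ} (2 * m) := by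
  have := Nat.odd_iff.1 hm
  refine ⟨⟨by lia, dvd_mul_left m 2⟩, fun σ ⟨h4, hdvd⟩ => Nat.le_of_dvd (by lia) ?_⟩
  exact hm.coprime_two_left.mul_dvd_of_dvd_of_dvd (by lia) hdvd

lemma isLeast_self_of_mod_four_eq_two {m : ℕ} (hm : m % 4 = 2) :
    IsLeast {σ | σ % 4 = 2 ∧ m ∣ σ} m :=
  ⟨⟨hm, dvd_rfl⟩, fun _ ⟨h4, hdvd⟩ => Nat.le_of_dvd (by lia) hdvd⟩

theorem stmt_16 (n m : ℕ) [NeZero n] (hm : 3 ≤ m) (hnm : n = 2 * m)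
    (S : Finset (DihedralGroup n))
    (hS : S = {DihedralGroup.r ((1 : ℕ) : ZMod n), DihedralGroup.r ((m - 1 : ℕ) : ZMod n),
               DihedralGroup.r ((m + 1 : ℕ) : ZMod n), DihedralGroup.r ((n - 1 : ℕ) : ZMod n)}) :
    (Odd m → exhibitsMinPST n S (2 * m)) ∧
    (m % 4 = 0 → ∀ τ : ℕ, 1 ≤ τ → ∀ u v : DihedralGroup n, u ≠ v → ¬ PST n S τ u v) ∧
    (m % 4 = 2 → exhibitsMinPST n S m) := by
  obtain rfl : S = (connExp n m).image .r := hS.trans (image_r_connExp (by lia)).symm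
  refine ⟨fun hodd => exhibitsMinPST_image_r_connExp hm hnm (isLeast_two_mul_of_odd hodd),
    fun h0 τ _ u v huv h => ?_,
    fun h2 => exhibitsMinPST_image_r_connExp hm hnm (isLeast_self_of_mod_four_eq_two h2)⟩
  obtain ⟨h4, hdvd, -⟩ := (PST_image_r_connExp_iff hm hnm huv).1 h
  have : 4 ∣ τ := (Nat.dvd_of_mod_eq_zero h0).trans hdvd
  lia

end PaperPST
end
end

section
/- Let n = 2m be even and let S = b⟨a⟩ = {b a^k : 0 ≤ k ≤ n−1} ⊆ D_n. Then Cay(D_n, S) exhibits PST (i.e., PST occurs between some pair of distinct vertices at some positive time) if and only if n = 2. -/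
/-!
If `S` is the complement of a subgroup `H` of index two, `Cay(Γ, S)` is the complete bipartite
graph whose parts are the two cosets of `H`. Two vertices of one part have equal rows in `P`, so
the vector `T_τ(P) e_u` takes the same value at both unless one of them is `u`. Hence it is not
`e_v` with `v ≠ u` as soon as the part of `v` has a third vertex. For parts of size one,
`T_1(P) = P` swaps the two vertices of `K₂`; for parts of size two, `T_2(P) = 2 P² - 1` exchanges
the antipodal vertices of the `4`-cycle. In `D_n`, `H` is the group of rotations, of order `n`.
-/

open Polynomial Matrix

noncomputable section

namespace PaperPST

section Matrix

variable {ι R : Type*} [Fintype ι] [DecidableEq ι] [CommSemiring R]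

/-- Write `p = X * q + c`: row `x` of `P * q(P)` depends only on row `x` of `P`, and `c • 1`
vanishes off the diagonal. -/
theorem aeval_apply_eq_of_row_eq {P : Matrix ι ι R} {u x y : ι} (hrow : P x = P y)
    (hx : x ≠ u) (hy : y ≠ u) (p : R[X]) : aeval P p x u = aeval P p y u := by
  rw [← X_mul_divX_add p]
  simp only [map_add, map_mul, aeval_X, aeval_C, Matrix.add_apply, Matrix.mul_apply, hrow,
    Matrix.algebraMap_matrix_apply, if_neg hx, if_neg hy]

end Matrix

theorem exists_mem_ne_ne_of_two_lt_ncard {α : Type*} {s : Set α} (hs : 2 < s.ncard) (a b : α) :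
    ∃ x ∈ s, x ≠ a ∧ x ≠ b := by
  have hcard : ({a, b} : Set α).ncard < s.ncard :=
    (Set.ncard_insert_le a {b}).trans_lt (by rwa [Set.ncard_singleton])
  simpa using Set.exists_mem_notMem_of_ncard_lt_ncard hcard

section Subgroup

variable {Γ : Type*} [Group Γ] {H : Subgroup Γ}

theorem mem_iff_eq_one_or_eq_of_card_eq_two (hcard : Nat.card H = 2) {h : Γ} (hh : h ∈ H)
    (hne : h ≠ 1) (x : Γ) : x ∈ H ↔ x = 1 ∨ x = h := by
  have huniq (y : H) (hy : y ≠ 1) : y = ⟨h, hh⟩ :=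
    ((Nat.card_eq_two_iff' (1 : H)).1 hcard).unique hy (by simpa using hne)
  constructor
  · intro hx
    by_contra! hx'
    exact hx'.2 (by simpa using huniq ⟨x, hx⟩ (by simpa using hx'.1))
  · rintro (rfl | rfl)
    exacts [H.one_mem, hh]

theorem card_compl_eq_of_index_eq_two [Finite Γ] (hH : H.index = 2) {S : Finset Γ}
    (hS : ∀ g, g ∈ S ↔ g ∉ H) : S.card = Nat.card H := by
  have hcompl : (S : Set Γ) = (H : Set Γ)ᶜ := Set.ext hS
  have hadd : Nat.card H + S.card = Nat.card Γ := by
    rw [← Set.ncard_coe_finset, hcompl]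
    exact Set.ncard_add_ncard_compl (H : Set Γ)
  have hmul : Nat.card H * 2 = Nat.card Γ := hH ▸ H.card_mul_index
  lia

end Subgroup

section CayleyGraph

variable {Γ : Type*} [Group Γ] [Fintype Γ] [DecidableEq Γ] {S : Finset Γ}

theorem discG_apply (u v : Γ) :
    discG Γ S u v = if u * v⁻¹ ∈ S then (S.card : ℂ)⁻¹ else 0 := by
  simp only [discG, adjG, Matrix.smul_apply, Matrix.of_apply, smul_eq_mul, mul_ite, mul_one,
    mul_zero]

theorem pstg_iff {τ : ℕ} {u v : Γ} :
    PSTG Γ S τ u v ↔ ∀ x, chebG Γ S τ x u = if x = v then 1 else 0 := by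
  simp only [PSTG, Matrix.mulVec_single_one, funext_iff, Matrix.col_apply, Pi.single_apply]

theorem discG_mul_left {k : Γ} (hk : ∀ g, k * g ∈ S ↔ g ∈ S) (u : Γ) :
    discG Γ S (k * u) = discG Γ S u := by
  ext v
  simp only [discG_apply, mul_assoc, hk]

theorem card_filter_mul_inv_mem (S : Finset Γ) (u : Γ) :
    (Finset.univ.filter fun w => u * w⁻¹ ∈ S).card = S.card :=
  Finset.card_equiv (Equiv.divLeft u) (by simp [div_eq_mul_inv])

theorem card_le_two_of_pstg {H : Subgroup Γ} (hS : ∀ k ∈ H, ∀ g, k * g ∈ S ↔ g ∈ S)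
    {τ : ℕ} {u v : Γ} (huv : u ≠ v) (h : PSTG Γ S τ u v) : Nat.card H ≤ 2 := by
  by_contra! hH
  obtain ⟨k, hkH, hk_one, hku⟩ :=
    exists_mem_ne_ne_of_two_lt_ncard (s := (H : Set Γ)) hH 1 (u * v⁻¹)
  have hkv : k * v ≠ v := by rwa [Ne, mul_eq_right]
  have hkvu : k * v ≠ u := by rwa [Ne, ← eq_mul_inv_iff_mul_eq]
  have hentry : chebG Γ S τ (k * v) u = chebG Γ S τ v u :=
    aeval_apply_eq_of_row_eq (discG_mul_left (hS k hkH) v) hkvu huv.symm _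
  simp [pstg_iff.1 h, hkv] at hentry

theorem pstg_singleton (s u : Γ) : PSTG Γ {s} 1 u (s * u) := by
  refine pstg_iff.2 fun x => ?_
  simp [chebG, discG_apply, mul_inv_eq_iff_eq_mul]

section IndexTwo

variable {H : Subgroup Γ}

/-- Every neighbour `w` of `u` is adjacent to all of the coset `H u` and to nothing else, so the
number of walks `u, w, v` is `#S` or `0`. -/
theorem discG_mul_discG_apply (hH : H.index = 2) (hS : ∀ g, g ∈ S ↔ g ∉ H) (u v : Γ) :
    (discG Γ S * discG Γ S) u v = if u * v⁻¹ ∈ S then 0 else (S.card : ℂ)⁻¹ := by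
  have hwalk (w : Γ) (hw : u * w⁻¹ ∈ S) : w * v⁻¹ ∈ S ↔ u * v⁻¹ ∉ S := by
    have hmul := H.mul_mem_iff_of_index_two hH (a := u * w⁻¹) (b := w * v⁻¹)
    rw [show u * w⁻¹ * (w * v⁻¹) = u * v⁻¹ by group] at hmul
    rw [hS] at hw
    simp only [hS]
    tauto
  have hterm (w : Γ) : discG Γ S u w * discG Γ S w v =
      if u * w⁻¹ ∈ S then (if u * v⁻¹ ∈ S then 0 else (S.card : ℂ)⁻¹ * (S.card : ℂ)⁻¹) else 0 := by
    rw [discG_apply, discG_apply]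
    by_cases hw : u * w⁻¹ ∈ S <;> simp [hw, hwalk]
  rw [Matrix.mul_apply, Finset.sum_congr rfl fun w _ => hterm w, ← Finset.sum_filter,
    Finset.sum_const, card_filter_mul_inv_mem, nsmul_eq_mul, mul_ite, mul_zero]
  congr 1
  field_simp

theorem pstg_two_of_card_eq_two (hH : H.index = 2) (hS : ∀ g, g ∈ S ↔ g ∉ H)
    (hcard : Nat.card H = 2) {h : Γ} (hh : h ∈ H) (hne : h ≠ 1) (u : Γ) :
    PSTG Γ S 2 u (h * u) := by
  have hT : chebG Γ S 2 = discG Γ S * discG Γ S + discG Γ S * discG Γ S - 1 := by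
    rw [chebG, Nat.cast_ofNat, Polynomial.Chebyshev.T_two, map_sub, map_mul, map_pow, aeval_X,
      map_ofNat, map_one, sq, two_mul]
  have hSc : S.card = 2 := (card_compl_eq_of_index_eq_two hH hS).trans hcard
  have hmem (x : Γ) : x * u⁻¹ ∈ S ↔ x ≠ u ∧ x ≠ h * u := by
    rw [hS, mem_iff_eq_one_or_eq_of_card_eq_two hcard hh hne, mul_inv_eq_one,
      mul_inv_eq_iff_eq_mul, not_or]
  refine pstg_iff.2 fun x => ?_
  have hentry : chebG Γ S 2 x u =
      (if x ≠ u ∧ x ≠ h * u then 0 else 1) - if x = u then 1 else 0 := by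
    rw [hT, Matrix.sub_apply, Matrix.add_apply, discG_mul_discG_apply hH hS, hSc, Matrix.one_apply]
    simp only [hmem]
    split_ifs <;> norm_num
  rw [hentry]
  have huh : u ≠ h * u := by rwa [Ne, right_eq_mul]
  by_cases hxu : x = u
  · simp [hxu, huh]
  · simp [hxu]

theorem stmt_17_general (H : Subgroup Γ) (hH : H.index = 2) (S : Finset Γ)
    (hS : ∀ g, g ∈ S ↔ g ∉ H) :
    (∃ τ : ℕ, 1 ≤ τ ∧ ∃ u v : Γ, u ≠ v ∧ PSTG Γ S τ u v) ↔ Nat.card H ≤ 2 := by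
  constructor
  · rintro ⟨τ, -, u, v, huv, h⟩
    exact card_le_two_of_pstg (fun k hk g => by rw [hS, hS, H.mul_mem_cancel_left hk]) huv h
  · intro hle
    have hScard := card_compl_eq_of_index_eq_two hH hS
    have hpos : 0 < Nat.card H := Nat.card_pos
    obtain hone | htwo : Nat.card H = 1 ∨ Nat.card H = 2 := by lia
    · obtain ⟨s, rfl⟩ := Finset.card_eq_one.1 (hScard.trans hone)
      have hs : s ≠ 1 := by rintro rfl; simpa using (hS 1).1
      exact ⟨1, le_rfl, 1, s * 1, by simpa using hs.symm, pstg_singleton s 1⟩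
    · obtain ⟨⟨h, hh⟩, hne, -⟩ := (Nat.card_eq_two_iff' (1 : H)).1 htwo
      have hne : h ≠ 1 := by simpa using hne
      exact ⟨2, one_le_two, 1, h * 1, by simpa using hne.symm,
        pstg_two_of_card_eq_two hH hS htwo hh hne 1⟩

end IndexTwo

end CayleyGraph

section Dihedral

open DihedralGroup

variable {n : ℕ}

theorem pst_iff_pstg [NeZero n] {S : Finset (DihedralGroup n)} {τ : ℕ} {u v : DihedralGroup n} :
    PST n S τ u v ↔ PSTG (DihedralGroup n) S τ u v :=
  Iff.rfl

theorem r_mem_zpowers_r_one (i : ZMod n) :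
    r i ∈ Subgroup.zpowers (r 1 : DihedralGroup n) :=
  Subgroup.mem_zpowers_iff.2 ⟨i.cast, by rw [r_one_zpow, ZMod.intCast_zmod_cast]⟩

theorem sr_notMem_zpowers_r_one (i : ZMod n) :
    sr i ∉ Subgroup.zpowers (r 1 : DihedralGroup n) := by
  simp [Subgroup.mem_zpowers_iff]

theorem card_zpowers_r_one : Nat.card (Subgroup.zpowers (r 1 : DihedralGroup n)) = n := by
  rw [Nat.card_zpowers, orderOf_r_one]

theorem index_zpowers_r_one [NeZero n] :
    (Subgroup.zpowers (r 1 : DihedralGroup n)).index = 2 := by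
  have h := (Subgroup.zpowers (r 1 : DihedralGroup n)).card_mul_index
  rw [card_zpowers_r_one, nat_card, mul_comm 2] at h
  exact Nat.eq_of_mul_eq_mul_left (NeZero.pos n) h

theorem mem_image_sr_iff [NeZero n] (g : DihedralGroup n) :
    g ∈ (Finset.range n).image (fun k : ℕ => sr (k : ZMod n)) ↔
      g ∉ Subgroup.zpowers (r 1 : DihedralGroup n) := by
  cases g with
  | r i => simp [r_mem_zpowers_r_one]
  | sr i =>
    simp only [sr_notMem_zpowers_r_one, not_false_eq_true, iff_true, Finset.mem_image,
      Finset.mem_range]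
    exact ⟨i.val, ZMod.val_lt i, by rw [ZMod.natCast_zmod_val]⟩

end Dihedral

theorem stmt_17 (n m : ℕ) [NeZero n] (hnm : n = 2 * m)
    (S : Finset (DihedralGroup n))
    (hS : S = (Finset.range n).image fun k : ℕ => DihedralGroup.sr (k : ZMod n)) :
    (∃ τ : ℕ, 1 ≤ τ ∧ ∃ u v : DihedralGroup n, u ≠ v ∧ PST n S τ u v) ↔ n = 2 := by
  have hmem : ∀ g, g ∈ S ↔ g ∉ Subgroup.zpowers (DihedralGroup.r 1) := hS ▸ mem_image_sr_iff
  have hn : n ≠ 0 := NeZero.ne n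
  simp only [pst_iff_pstg]
  rw [stmt_17_general _ index_zpowers_r_one S hmem, card_zpowers_r_one]
  lia

end PaperPST
end
end

section
/- Let n ≥ 3 and let S = {b, ba} ⊆ D_n. Then Cay(D_n, S) exhibits PST at the minimum time n: PST occurs between some pair of distinct vertices at time n, and no PST occurs between any pair of distinct vertices at any time σ with 1 ≤ σ < n. -/
/-!
If `x ^ 2 = y ^ 2 = 1`, then `T_k ((x + y) / 2)` is the average of the two alternating products
`x y x ⋯` and `y x y ⋯` of length `k`, the noncommutative form of
`T_k ((z + z⁻¹) / 2) = (z ^ k + z ^ (-k)) / 2`. Let `x` and `y` be the left translations by two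
involutions `s` and `t` of a finite group. Then `T_k(P) e_u` is the average of the basis vectors
at `(s t s ⋯) u` and `(t s t ⋯) u`, and this is a basis vector exactly when the two words agree,
that is, when `(s t) ^ k = 1`. When `k` is the order of `s t`, the word is not `1`, so the transfer
is to another vertex. So PST first occurs at the order of `s t`; in `D_n`, the product of `b` and
`b a` is the rotation `a`, of order `n`.
-/

open Polynomial Matrix

noncomputable section

namespace PaperPST

section AlternatingProduct

variable {M : Type*} [Monoid M]

/-- The alternating product `x y x ⋯` of `k` factors. Its first factor is `x`, whereas
`CoxeterSystem.alternatingWord` prescribes the last letter. -/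
def altProd (x y : M) : ℕ → M
  | 0 => 1
  | k + 1 => x * altProd y x k

@[simp]
lemma altProd_zero (x y : M) : altProd x y 0 = 1 := rfl

lemma altProd_succ (x y : M) (k : ℕ) : altProd x y (k + 1) = x * altProd y x k := by
  rw [altProd]

lemma map_altProd {N F : Type*} [Monoid N] [FunLike F M N] [MonoidHomClass F M N] (f : F)
    (x y : M) (k : ℕ) : f (altProd x y k) = altProd (f x) (f y) k := by
  induction k generalizing x y with
  | zero => simp
  | succ k ih => simp only [altProd_succ, map_mul, ih]

lemma mul_altProd_succ {x : M} (hx : x * x = 1) (y : M) (k : ℕ) :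
    x * altProd x y (k + 1) = altProd y x k := by
  rw [altProd_succ, ← mul_assoc, hx, one_mul]

lemma altProd_two_mul (x y : M) (k : ℕ) : altProd x y (2 * k) = (x * y) ^ k := by
  induction k with
  | zero => simp
  | succ k ih => rw [mul_add_one, altProd_succ, altProd_succ, ih, pow_succ', mul_assoc]

lemma altProd_two_mul_add_one (x y : M) (k : ℕ) : altProd x y (2 * k + 1) = (x * y) ^ k * x := by
  rw [altProd_succ, altProd_two_mul, mul_pow_mul]

lemma altProd_eq_pow_mul_altProd {x y : M} (hx : x * x = 1) (hy : y * y = 1) (k : ℕ) :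
    altProd x y k = (x * y) ^ k * altProd y x k := by
  induction k generalizing x y with
  | zero => simp
  | succ k ih =>
    calc altProd x y (k + 1) = x * ((y * x) ^ k * altProd x y k) := by rw [altProd_succ, ih hy hx]
      _ = (x * y) ^ k * x * (y * altProd y x (k + 1)) := by
        rw [mul_altProd_succ hy, mul_pow_mul, mul_assoc]
      _ = (x * y) ^ (k + 1) * altProd y x (k + 1) := by simp only [pow_succ, mul_assoc]

end AlternatingProduct

section Involutions

variable {Γ : Type*} [Group Γ] {s t : Γ}

lemma altProd_eq_altProd_swap_iff (hs : s * s = 1) (ht : t * t = 1) (k : ℕ) :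
    altProd s t k = altProd t s k ↔ (s * t) ^ k = 1 := by
  rw [altProd_eq_pow_mul_altProd hs ht, mul_eq_right]

lemma altProd_orderOf_ne_one (hs : orderOf s = 2) (hst : 0 < orderOf (s * t)) :
    altProd s t (orderOf (s * t)) ≠ 1 := by
  intro h
  obtain ⟨k, hk | hk⟩ := Nat.even_or_odd' (orderOf (s * t))
  · rw [hk, altProd_two_mul] at h
    have hle := orderOf_le_of_pow_eq_one (by lia) h
    lia
  · rw [hk, altProd_two_mul_add_one] at h
    have hpow : (s * t) ^ (2 * k + 1) = 1 := hk ▸ pow_orderOf_eq_one (s * t)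
    have hrot : (s * t) ^ k = s := by
      rw [eq_inv_of_mul_eq_one_left h, inv_eq_iff_mul_eq_one, ← sq, ← hs, pow_orderOf_eq_one]
    have hone : s * t = 1 := by
      rwa [pow_succ, mul_comm 2, pow_mul, hrot, ← hs, pow_orderOf_eq_one, one_mul] at hpow
    have hs1 : s = 1 := by rw [← hrot, hone, one_pow]
    simp [hs1] at hs

end Involutions

/-- The `2 *` on both sides avoids dividing by `2`, which need not be invertible. -/
lemma two_mul_aeval_chebyshev_T {R A : Type*} [CommRing R] [Ring A] [Algebra R A] {p x y : A}
    (hx : x * x = 1) (hy : y * y = 1) (hp : 2 * p = x + y) (k : ℕ) :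
    2 * aeval p (Chebyshev.T R k) = altProd x y k + altProd y x k := by
  induction k using Nat.twoStepInduction with
  | zero => simp [one_add_one_eq_two]
  | one => simp [altProd_succ, hp]
  | more k ih₀ ih₁ =>
    calc 2 * aeval p (Chebyshev.T R (k + 2 : ℕ))
        = 2 * p * (2 * aeval p (Chebyshev.T R (k + 1 : ℕ))) - 2 * aeval p (Chebyshev.T R k) := by
          push_cast
          simp only [Chebyshev.T_add_two, map_sub, map_mul, map_ofNat, aeval_X]
          noncomm_ring
      _ = altProd x y (k + 2) + altProd y x (k + 2) := by
          rw [ih₀, ih₁, hp, mul_add, add_mul, add_mul, mul_altProd_succ hx, mul_altProd_succ hy,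
            altProd_succ x y (k + 1), altProd_succ y x (k + 1)]
          abel

section RegularRepresentation

variable {Γ : Type*} [Group Γ] [Fintype Γ] [DecidableEq Γ]

/-- The left regular representation by permutation matrices: `leftRegularMatrix R g` sends the basis
vector at `u` to the one at `g * u`. The inverse is needed because `σ.permMatrix R *ᵥ v = v ∘ σ`. -/
def leftRegularMatrix (R : Type*) [CommRing R] : Γ →* Matrix Γ Γ R where
  toFun g := (Equiv.mulLeft g⁻¹).permMatrix R
  map_one' := by simp
  map_mul' g h := by rw [_root_.mul_inv_rev, Equiv.mulLeft_mul, permMatrix_mul]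

lemma leftRegularMatrix_mulVec_single (R : Type*) [CommRing R] (g u : Γ) :
    leftRegularMatrix R g *ᵥ Pi.single u 1 = Pi.single (g * u) 1 := by
  ext v
  simp [leftRegularMatrix, Pi.single_apply, inv_mul_eq_iff_eq_mul]

lemma adjG_eq_sum_leftRegularMatrix (S : Finset Γ) : adjG Γ S = ∑ s ∈ S, leftRegularMatrix ℂ s := by
  ext u v
  simp [adjG, leftRegularMatrix, Matrix.sum_apply, PEquiv.toMatrix_apply, inv_mul_eq_iff_eq_mul,
    ← mul_inv_eq_iff_eq_mul]

lemma two_mul_discG_pair (s t : Γ) :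
    2 * discG Γ {s, t} = leftRegularMatrix ℂ s + leftRegularMatrix ℂ t := by
  rw [discG, adjG_eq_sum_leftRegularMatrix]
  rcases eq_or_ne s t with rfl | hst
  · simp [two_mul]
  · rw [Finset.sum_pair hst, Finset.card_pair hst, two_mul]
    module

end RegularRepresentation

section PerfectStateTransfer

variable {Γ : Type*} [Group Γ] [Fintype Γ] [DecidableEq Γ] {s t : Γ}

lemma two_mul_chebG_pair (hs : s * s = 1) (ht : t * t = 1) (k : ℕ) :
    2 * chebG Γ {s, t} k =
      leftRegularMatrix ℂ (altProd s t k) + leftRegularMatrix ℂ (altProd t s k) := by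
  rw [map_altProd, map_altProd]
  exact two_mul_aeval_chebyshev_T (by rw [← map_mul, hs, map_one]) (by rw [← map_mul, ht, map_one])
    (two_mul_discG_pair s t) k

lemma PSTG_pair_iff (hs : s * s = 1) (ht : t * t = 1) (k : ℕ) (u v : Γ) :
    PSTG Γ {s, t} k u v ↔ (s * t) ^ k = 1 ∧ altProd s t k * u = v := by
  have hcheb : chebG Γ {s, t} k *ᵥ Pi.single u 1 + chebG Γ {s, t} k *ᵥ Pi.single u 1 =
      Pi.single (altProd s t k * u) 1 + Pi.single (altProd t s k * u) 1 := by
    rw [← add_mulVec, ← two_mul, two_mul_chebG_pair hs ht, add_mulVec,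
      leftRegularMatrix_mulVec_single, leftRegularMatrix_mulVec_single]
  calc PSTG Γ {s, t} k u v
    _ ↔ (Pi.single (altProd s t k * u) 1 + Pi.single (altProd t s k * u) 1 : Γ → ℂ) =
          Pi.single v 1 + Pi.single v 1 := by
      rw [← hcheb, ← two_nsmul, ← two_nsmul, nsmul_right_inj two_ne_zero, PSTG]
    _ ↔ altProd s t k * u = v ∧ altProd t s k * u = v := by
      simp [Pi.single_add_single_eq_single_add_single]
    _ ↔ (s * t) ^ k = 1 ∧ altProd s t k * u = v := by
      rw [← altProd_eq_altProd_swap_iff hs ht]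
      exact ⟨fun ⟨hst, hts⟩ ↦ ⟨mul_right_cancel (hst.trans hts.symm), hst⟩,
        fun ⟨hswap, hst⟩ ↦ ⟨hst, hswap ▸ hst⟩⟩

theorem stmt_19_general (hs : orderOf s = 2) (ht : orderOf t = 2) :
    (∃ u v : Γ, u ≠ v ∧ PSTG Γ {s, t} (orderOf (s * t)) u v) ∧
      ∀ σ : ℕ, 1 ≤ σ → σ < orderOf (s * t) → ∀ u v : Γ, u ≠ v → ¬ PSTG Γ {s, t} σ u v := by
  have hss : s * s = 1 := by rw [← sq, ← hs, pow_orderOf_eq_one]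
  have htt : t * t = 1 := by rw [← sq, ← ht, pow_orderOf_eq_one]
  simp only [PSTG_pair_iff hss htt]
  refine ⟨⟨1, altProd s t (orderOf (s * t)), ?_, pow_orderOf_eq_one _, mul_one _⟩, ?_⟩
  · exact (altProd_orderOf_ne_one hs (orderOf_pos _)).symm
  · rintro σ hσ hlt u v - ⟨hpow, -⟩
    exact hlt.not_ge (orderOf_le_of_pow_eq_one hσ hpow)

end PerfectStateTransfer

theorem stmt_19 (n : ℕ) [NeZero n] (hn : 3 ≤ n)
    (S : Finset (DihedralGroup n))
    (hS : S = {DihedralGroup.sr ((0 : ℕ) : ZMod n), DihedralGroup.sr ((1 : ℕ) : ZMod n)}) :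
    exhibitsMinPST n S n := by
  obtain rfl : S = {DihedralGroup.sr 0, DihedralGroup.sr 1} := by simpa using hS
  have hba : orderOf (DihedralGroup.sr 0 * DihedralGroup.sr 1 : DihedralGroup n) = n := by simp
  have h := stmt_19_general (DihedralGroup.orderOf_sr (0 : ZMod n)) (DihedralGroup.orderOf_sr 1)
  rw [hba] at h
  exact h

end PaperPST
end
end
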